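/- Let p > 1 and let q ≤ 0 be continuous and single-barrier on [0,1] (i.e., increasing on [0, x_0] and decreasing on [x_0, 1] for some x_0 ∈ [0,1]). Let λ_1 < λ_2 < ... be the eigenvalues of the Dirichlet problem -((y')^{(p-1)})' = (p-1)(λ - q(x)) y^{(p-1)}, y(0) = y(1) = 0. Then for n > m with λ_n > λ_m ≥ -2q*, where q* = min{q(0), q(1)}, one has λ_n / λ_m ≥ n^p / m^p. -/

import Mathlib

/-- λ is a Dirichlet eigenvalue of -((y')^{(p-1)})' = (p-1)(λ - q) y^{(p-1)} on [a,b]. -/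
def IsDirichletEigenvalue (p : ℝ) (q : ℝ → ℝ) (a b lam : ℝ) : Prop :=
  ∃ y yd : ℝ → ℝ,
    (∃ x ∈ Set.Icc a b, y x ≠ 0) ∧
    (∀ x ∈ Set.Icc a b, HasDerivAt y (yd x) x) ∧
    (∀ x ∈ Set.Icc a b, HasDerivAt (fun t => |yd t| ^ (p - 2) * yd t)
      (-(p - 1) * (lam - q x) * (|y x| ^ (p - 2) * y x)) x) ∧
    y a = 0 ∧ y b = 0

/-!
In generalized polar coordinates with frequency `z`, the Prüfer angle `θ` of a solution of
`-((y')^{(p-1)})' = (p-1) (z ^ p - q) y^{(p-1)}` with `y a = 0` satisfies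
`θ' = z - z ^ (1 - p) q(x) |S_p(θ)| ^ p`, where `S_p` is the generalized sine, and `z ^ p` is the
`n`-th eigenvalue if and only if `θ b = n π_p`. For a nonnegative decreasing `-q` the quotient
`θ b / z` is nonincreasing in `z`: its derivative is a weighted integral whose sign can be
determined one half turn at a time. A single-barrier potential is cut at its peak `x₀`. The angles
measured from the two ends add up to `n π_p` at `x₀` when `z ^ p` is the `n`-th eigenvalue, so
`n / λ_n ^ (1 / p)` is nonincreasing in `n`.
-/

open Set Filter Topology

/-- The odd power `x ↦ |x| ^ (r - 2) * x` of degree `r - 1`, written `x^{(r - 1)}` on paper. -/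
noncomputable def signedPow (r x : ℝ) : ℝ := |x| ^ (r - 2) * x

section SignedPow

variable {p q : ℝ}

@[simp]
theorem signedPow_zero (r : ℝ) : signedPow r 0 = 0 := by simp [signedPow]

@[simp]
theorem signedPow_neg (r x : ℝ) : signedPow r (-x) = -signedPow r x := by simp [signedPow]

theorem signedPow_mul (r x y : ℝ) : signedPow r (x * y) = signedPow r x * signedPow r y := by
  rw [signedPow, signedPow, signedPow, abs_mul, Real.mul_rpow (abs_nonneg x) (abs_nonneg y)]
  ring

theorem signedPow_nonneg (r : ℝ) {x : ℝ} (hx : 0 ≤ x) : 0 ≤ signedPow r x := by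
  unfold signedPow; positivity

theorem signedPow_of_nonneg (hp : 1 < p) {x : ℝ} (hx : 0 ≤ x) : signedPow p x = x ^ (p - 1) := by
  rcases hx.eq_or_lt with rfl | hx
  · rw [signedPow_zero, Real.zero_rpow (by linarith)]
  · rw [signedPow, abs_of_pos hx, ← Real.rpow_add_one hx.ne']
    ring_nf

theorem abs_signedPow (hp : 1 < p) (x : ℝ) : |signedPow p x| = |x| ^ (p - 1) := by
  rw [← signedPow_of_nonneg hp (abs_nonneg x), signedPow, signedPow, abs_mul, abs_abs,
    abs_of_nonneg (by positivity : 0 ≤ |x| ^ (p - 2))]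

theorem signedPow_mul_self (hp : 1 < p) (x : ℝ) : signedPow p x * x = |x| ^ p := by
  rcases eq_or_ne x 0 with rfl | hx
  · rw [mul_zero, abs_zero, Real.zero_rpow (by linarith)]
  · have h : 0 < |x| := abs_pos.2 hx
    rw [signedPow, mul_assoc, ← abs_mul_abs_self, ← mul_assoc, ← Real.rpow_add_one h.ne',
      ← Real.rpow_add_one h.ne']
    ring_nf

theorem signedPow_monotoneOn (hp : 1 < p) : MonotoneOn (signedPow p) (Ici 0) := by
  intro x hx y hy hxy
  rw [signedPow_of_nonneg hp hx, signedPow_of_nonneg hp hy]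
  exact Real.rpow_le_rpow hx hxy (by linarith)

theorem abs_signedPow_rpow (h : p.HolderConjugate q) (x : ℝ) : |signedPow p x| ^ q = |x| ^ p := by
  rw [abs_signedPow h.lt, ← Real.rpow_mul (abs_nonneg x), h.sub_one_mul_conj]

theorem signedPow_signedPow (h : p.HolderConjugate q) (x : ℝ) :
    signedPow q (signedPow p x) = x := by
  have hnonneg : ∀ y : ℝ, 0 ≤ y → signedPow q (signedPow p y) = y := fun y hy ↦ by
    rw [signedPow_of_nonneg h.symm.lt (signedPow_nonneg p hy), signedPow_of_nonneg h.lt hy,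
      ← Real.rpow_mul hy, (by nlinarith [h.sub_one_mul_conj, h.mul_eq_add] : (p - 1) * (q - 1) = 1),
      Real.rpow_one]
  rcases le_total 0 x with hx | hx
  · exact hnonneg x hx
  · have := hnonneg (-x) (by linarith)
    rwa [signedPow_neg, signedPow_neg, neg_inj] at this

theorem signedPow_eq_zero (h : p.HolderConjugate q) {x : ℝ} : signedPow p x = 0 ↔ x = 0 :=
  ⟨fun hx ↦ by rw [← signedPow_signedPow h x, hx, signedPow_zero], fun hx ↦ by simp [hx]⟩

theorem hasDerivAt_abs_rpow_signedPow (hp : 1 < p) (x : ℝ) :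
    HasDerivAt (fun t : ℝ ↦ |t| ^ p) (p * signedPow p x) x := by
  simpa only [signedPow, mul_assoc] using hasDerivAt_abs_rpow x hp

theorem hasDerivAt_signedPow {r x : ℝ} (hx : x ≠ 0) :
    HasDerivAt (signedPow r) ((r - 1) * |x| ^ (r - 2)) x := by
  refine (((hasDerivAt_abs hx).rpow_const (Or.inl (abs_ne_zero.2 hx))).mul
    (hasDerivAt_id x)).congr_deriv ?_
  have hsign : (SignType.sign x : ℝ) * x = |x| := sign_mul_self x
  rw [Real.rpow_sub_one (abs_ne_zero.2 hx)]
  calc _ = ((SignType.sign x : ℝ) * x / |x|) * (r - 2) * |x| ^ (r - 2) + |x| ^ (r - 2) := by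
        simp only [id]; ring
    _ = _ := by rw [hsign, div_self (abs_ne_zero.2 hx)]; ring

theorem continuous_signedPow (hp : 1 < p) : Continuous (signedPow p) := by
  have hd : deriv (fun x : ℝ ↦ ‖x‖ ^ p) = fun x ↦ p * signedPow p x :=
    funext fun x ↦ (hasDerivAt_abs_rpow_signedPow hp x).deriv
  have hc := hd ▸ (contDiff_norm_rpow (E := ℝ) hp).continuous_deriv le_rfl
  exact (hc.const_mul p⁻¹).congr fun x ↦ inv_mul_cancel_left₀ (by linarith) _

end SignedPow

section GeneralizedTrigonometry

open Real

variable {p q : ℝ}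

/-- The weighted-homogeneous norm of the point `(sin φ, cos φ)`. -/
noncomputable def circleNorm (p q φ : ℝ) : ℝ := |sin φ| ^ p + |cos φ| ^ q

/-- The point at angle `φ` on the curve `|u| ^ p + |v| ^ q = 1` has first coordinate
`curveSin p q φ` and, by the symmetry exchanging the two axes, second coordinate
`curveSin q p (π / 2 - φ)`. -/
noncomputable def curveSin (p q φ : ℝ) : ℝ := circleNorm p q φ ^ (-p⁻¹) * sin φ

/-- The derivative with respect to `φ` of the time at which the flow `u' = v^{(q - 1)}`,
`v' = -(p - 1) u^{(p - 1)}` along the curve `|u| ^ p + |v| ^ q = 1` reaches the angle `φ`. -/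
noncomputable def flowSpeed (p q φ : ℝ) : ℝ :=
  (cos φ ^ 2 + (q - 1) * sin φ ^ 2) / circleNorm p q φ

/-- The time at which the flow `u' = v^{(q - 1)}`, `v' = -(p - 1) u^{(p - 1)}` along the curve
`|u| ^ p + |v| ^ q = 1`, started at `(0, 1)`, reaches the angle `φ`. -/
noncomputable def flowTime (p q φ : ℝ) : ℝ := ∫ t in (0 : ℝ)..φ, flowSpeed p q t

theorem circleNorm_pos (φ : ℝ) : 0 < circleNorm p q φ := by
  unfold circleNorm
  rcases eq_or_ne (sin φ) 0 with h | h
  · have : cos φ ≠ 0 := fun h' ↦ by simpa [h, h'] using sin_sq_add_cos_sq φ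
    positivity
  · positivity

theorem circleNorm_pi_div_two_sub (φ : ℝ) :
    circleNorm q p (π / 2 - φ) = circleNorm p q φ := by
  simp [circleNorm, sin_pi_div_two_sub, cos_pi_div_two_sub, add_comm]

theorem flowSpeed_pi_div_two_sub (h : p.HolderConjugate q) (φ : ℝ) :
    flowSpeed q p (π / 2 - φ) = (p - 1) * flowSpeed p q φ := by
  have hpq : (p - 1) * (q - 1) = 1 := by nlinarith [h.mul_eq_add]
  rw [flowSpeed, flowSpeed, circleNorm_pi_div_two_sub, sin_pi_div_two_sub, cos_pi_div_two_sub,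
    mul_div_assoc']
  congr 1
  linear_combination -(sin φ ^ 2) * hpq

theorem curveSin_pi_div_two_sub (φ : ℝ) :
    curveSin q p (π / 2 - φ) = circleNorm p q φ ^ (-q⁻¹) * cos φ := by
  rw [curveSin, circleNorm_pi_div_two_sub, sin_pi_div_two_sub]

theorem signedPow_curveSin (h : p.HolderConjugate q) (φ : ℝ) :
    signedPow p (curveSin p q φ) = circleNorm p q φ ^ (-q⁻¹) * signedPow p (sin φ) := by
  have hn := circleNorm_pos (p := p) (q := q) φ
  rw [curveSin, signedPow_mul, signedPow_of_nonneg h.lt (by positivity), ← rpow_mul hn.le]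
  congr 2
  rw [← h.one_sub_inv]
  have := h.ne_zero
  field_simp

theorem abs_curveSin_rpow (h : p.HolderConjugate q) (φ : ℝ) :
    |curveSin p q φ| ^ p = |sin φ| ^ p / circleNorm p q φ := by
  have hn := circleNorm_pos (p := p) (q := q) φ
  rw [curveSin, abs_mul, mul_rpow (abs_nonneg _) (abs_nonneg _),
    abs_of_pos (rpow_pos_of_pos hn _), ← rpow_mul hn.le, neg_mul, inv_mul_cancel₀ h.ne_zero,
    rpow_neg_one, mul_comm, div_eq_mul_inv]

theorem abs_curveSin_rpow_add (h : p.HolderConjugate q) (φ : ℝ) :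
    |curveSin p q φ| ^ p + |curveSin q p (π / 2 - φ)| ^ q = 1 := by
  rw [abs_curveSin_rpow h, abs_curveSin_rpow h.symm, circleNorm_pi_div_two_sub,
    sin_pi_div_two_sub, ← add_div]
  exact div_self (circleNorm_pos φ).ne'

theorem hasDerivAt_circleNorm (h : p.HolderConjugate q) (φ : ℝ) :
    HasDerivAt (circleNorm p q)
      (p * signedPow p (sin φ) * cos φ + q * signedPow q (cos φ) * (-sin φ)) φ :=
  ((hasDerivAt_abs_rpow_signedPow h.lt _).comp φ (hasDerivAt_sin φ)).add
    ((hasDerivAt_abs_rpow_signedPow h.symm.lt _).comp φ (hasDerivAt_cos φ))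

theorem hasDerivAt_curveSin (h : p.HolderConjugate q) (φ : ℝ) :
    HasDerivAt (curveSin p q)
      (signedPow q (curveSin q p (π / 2 - φ)) * flowSpeed p q φ) φ := by
  have hn := circleNorm_pos (p := p) (q := q) φ
  refine (((hasDerivAt_circleNorm h φ).rpow_const (p := -p⁻¹) (Or.inl hn.ne')).mul
    (hasDerivAt_sin φ)).congr_deriv ?_
  have hp := h.ne_zero
  have hsin : signedPow p (sin φ) * sin φ
      = circleNorm p q φ - signedPow q (cos φ) * cos φ := by
    rw [signedPow_mul_self h.lt, signedPow_mul_self h.symm.lt, circleNorm]; ring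
  rw [signedPow_curveSin h.symm, sin_pi_div_two_sub, circleNorm_pi_div_two_sub, flowSpeed,
    rpow_sub_one hn.ne']
  field_simp
  linear_combination -p * cos φ * hsin - sin φ ^ 2 * signedPow q (cos φ) * h.symm.sub_one_mul_conj

theorem hasDerivAt_curveSin_pi_div_two_sub (h : p.HolderConjugate q) (φ : ℝ) :
    HasDerivAt (fun t ↦ curveSin q p (π / 2 - t))
      (-((p - 1) * signedPow p (curveSin p q φ)) * flowSpeed p q φ) φ := by
  refine ((hasDerivAt_curveSin h.symm (π / 2 - φ)).comp_const_sub (π / 2) φ).congr_deriv ?_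
  rw [flowSpeed_pi_div_two_sub h, sub_sub_cancel]
  ring

theorem continuous_flowSpeed (h : p.HolderConjugate q) : Continuous (flowSpeed p q) :=
  Continuous.div (by fun_prop)
    (continuous_iff_continuousAt.2 fun φ ↦ (hasDerivAt_circleNorm h φ).continuousAt)
    fun φ ↦ (circleNorm_pos φ).ne'

theorem flowSpeed_pos (h : p.HolderConjugate q) (φ : ℝ) : 0 < flowSpeed p q φ := by
  refine div_pos ?_ (circleNorm_pos φ)
  have hq := sub_pos.2 h.symm.lt
  rcases eq_or_ne (sin φ) 0 with hs | hs
  · have : cos φ ≠ 0 := fun hc ↦ by simpa [hs, hc] using sin_sq_add_cos_sq φ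
    positivity
  · positivity

theorem hasDerivAt_flowTime (h : p.HolderConjugate q) (φ : ℝ) :
    HasDerivAt (flowTime p q) (flowSpeed p q φ) φ :=
  (continuous_flowSpeed h).integral_hasStrictDerivAt 0 φ |>.hasDerivAt

theorem strictMono_flowTime (h : p.HolderConjugate q) : StrictMono (flowTime p q) :=
  strictMono_of_deriv_pos fun φ ↦ by
    rw [(hasDerivAt_flowTime h φ).deriv]; exact flowSpeed_pos h φ

theorem flowTime_zero : flowTime p q 0 = 0 := intervalIntegral.integral_same

theorem flowTime_neg (φ : ℝ) : flowTime p q (-φ) = -flowTime p q φ := by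
  have heven : ∀ t, flowSpeed p q (-t) = flowSpeed p q t := fun t ↦ by
    simp [flowSpeed, circleNorm]
  have hsub := intervalIntegral.integral_comp_neg (a := 0) (b := φ) (flowSpeed p q)
  simp only [heven, neg_zero] at hsub
  rw [flowTime, flowTime, hsub, intervalIntegral.integral_symm]

theorem flowTime_add_pi (h : p.HolderConjugate q) (φ : ℝ) :
    flowTime p q (φ + π) = flowTime p q φ + flowTime p q π := by
  have hper : Function.Periodic (flowSpeed p q) π := fun t ↦ by simp [flowSpeed, circleNorm]
  have := hper.intervalIntegral_add_eq_add 0 φ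
    fun _ _ ↦ (continuous_flowSpeed h).intervalIntegrable _ _
  rwa [zero_add] at this

theorem flowTime_int_mul_pi (h : p.HolderConjugate q) (k : ℤ) :
    flowTime p q (k * π) = k * flowTime p q π := by
  simpa [flowTime_zero] using AddConstMapClass.map_zsmul_add
    (⟨flowTime p q, flowTime_add_pi h⟩ : AddConstMap ℝ ℝ π (flowTime p q π)) k 0

theorem flowTime_pi_div_two (h : p.HolderConjugate q) :
    flowTime p q (π / 2) = flowTime p q π / 2 := by
  have := flowTime_add_pi h (-(π / 2))
  rw [flowTime_neg, neg_add_eq_sub, sub_half] at this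
  linarith

theorem flowTime_pi_pos (h : p.HolderConjugate q) : 0 < flowTime p q π :=
  flowTime_zero (p := p) (q := q) ▸ strictMono_flowTime h pi_pos

theorem surjective_flowTime (h : p.HolderConjugate q) : Function.Surjective (flowTime p q) := by
  have hpos := flowTime_pi_pos h
  have hmono := (strictMono_flowTime h).monotone
  refine Continuous.surjective
    (continuous_iff_continuousAt.2 fun φ ↦ (hasDerivAt_flowTime h φ).continuousAt)
    (hmono.tendsto_atTop_atTop fun y ↦ ?_) (hmono.tendsto_atBot_atBot fun y ↦ ?_)
  · exact ⟨⌈y / flowTime p q π⌉ * π, by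
      rw [flowTime_int_mul_pi h, ← div_le_iff₀ hpos]; exact Int.le_ceil _⟩
  · exact ⟨⌊y / flowTime p q π⌋ * π, by
      rw [flowTime_int_mul_pi h, ← le_div_iff₀ hpos]; exact Int.floor_le _⟩

end GeneralizedTrigonometry

section GeneralizedSine

variable (p : ℝ) [hp : Fact (1 < p)]

theorem holderConjugate_conjExponent : p.HolderConjugate p.conjExponent :=
  .conjExponent hp.out

/-- The half period `π_p` of the generalized sine of exponent `p`. -/
noncomputable def genPi (p : ℝ) : ℝ := flowTime p p.conjExponent Real.pi

/-- The Euclidean angle of the point `(genSin p t, genCos p t ^ {(p - 1)})`, measured from the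
second axis: the inverse of `flowTime`. -/
noncomputable def genAngle : ℝ ≃o ℝ :=
  ((strictMono_flowTime (holderConjugate_conjExponent p)).orderIsoOfSurjective _
    (surjective_flowTime (holderConjugate_conjExponent p))).symm

/-- The generalized sine: the solution of `(S'^{(p - 1)})' = -(p - 1) S^{(p - 1)}` with `S 0 = 0`
and `S' 0 = 1`. -/
noncomputable def genSin (t : ℝ) : ℝ := curveSin p p.conjExponent (genAngle p t)

/-- The derivative of the generalized sine. -/
noncomputable def genCos (t : ℝ) : ℝ :=
  signedPow p.conjExponent (curveSin p.conjExponent p (Real.pi / 2 - genAngle p t))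

variable {p} in
theorem genAngle_eq_of_flowTime_eq {t φ : ℝ} (h : flowTime p p.conjExponent φ = t) :
    genAngle p t = φ :=
  (OrderIso.symm_apply_eq _).2 h.symm

theorem flowTime_genAngle (t : ℝ) : flowTime p p.conjExponent (genAngle p t) = t :=
  (genAngle p).symm_apply_apply t

theorem genAngle_zero : genAngle p 0 = 0 := genAngle_eq_of_flowTime_eq flowTime_zero

theorem genAngle_neg (t : ℝ) : genAngle p (-t) = -genAngle p t :=
  genAngle_eq_of_flowTime_eq (by rw [flowTime_neg, flowTime_genAngle])

theorem genAngle_add_genPi (t : ℝ) : genAngle p (t + genPi p) = genAngle p t + Real.pi :=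
  genAngle_eq_of_flowTime_eq (by
    rw [flowTime_add_pi (holderConjugate_conjExponent p), flowTime_genAngle, genPi])

theorem genAngle_genPi_div_two : genAngle p (genPi p / 2) = Real.pi / 2 :=
  genAngle_eq_of_flowTime_eq (flowTime_pi_div_two (holderConjugate_conjExponent p))

theorem hasDerivAt_genAngle (t : ℝ) :
    HasDerivAt (genAngle p) (flowSpeed p p.conjExponent (genAngle p t))⁻¹ t :=
  HasDerivAt.of_local_left_inverse (genAngle p).continuous.continuousAt
    (hasDerivAt_flowTime (holderConjugate_conjExponent p) _)
    (flowSpeed_pos (holderConjugate_conjExponent p) _).ne' (.of_forall (flowTime_genAngle p))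

theorem genPi_pos : 0 < genPi p := flowTime_pi_pos (holderConjugate_conjExponent p)

theorem genCos_eq (t : ℝ) : genCos p t = signedPow p.conjExponent
    (circleNorm p p.conjExponent (genAngle p t) ^ (-p.conjExponent⁻¹) *
      Real.cos (genAngle p t)) := by
  rw [genCos, curveSin_pi_div_two_sub]

theorem signedPow_genCos (t : ℝ) :
    signedPow p (genCos p t) = curveSin p.conjExponent p (Real.pi / 2 - genAngle p t) :=
  signedPow_signedPow (holderConjugate_conjExponent p).symm _

theorem hasDerivAt_genSin (t : ℝ) : HasDerivAt (genSin p) (genCos p t) t := by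
  have h := holderConjugate_conjExponent p
  refine ((hasDerivAt_curveSin h (genAngle p t)).comp t (hasDerivAt_genAngle p t)).congr_deriv ?_
  exact mul_inv_cancel_right₀ (flowSpeed_pos h _).ne' _

theorem hasDerivAt_signedPow_genCos (t : ℝ) :
    HasDerivAt (fun t ↦ signedPow p (genCos p t)) (-((p - 1) * signedPow p (genSin p t))) t := by
  have h := holderConjugate_conjExponent p
  rw [funext (signedPow_genCos p)]
  refine ((hasDerivAt_curveSin_pi_div_two_sub h (genAngle p t)).comp t
    (hasDerivAt_genAngle p t)).congr_deriv ?_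
  exact mul_inv_cancel_right₀ (flowSpeed_pos h _).ne' _

theorem abs_genSin_rpow_add_abs_genCos_rpow (t : ℝ) :
    |genSin p t| ^ p + |genCos p t| ^ p = 1 := by
  have h := holderConjugate_conjExponent p
  rw [genCos, abs_signedPow_rpow h.symm]
  exact abs_curveSin_rpow_add h _

theorem genSin_zero : genSin p 0 = 0 := by simp [genSin, genAngle_zero, curveSin]

theorem genCos_genPi_div_two : genCos p (genPi p / 2) = 0 := by
  simp [genCos, genAngle_genPi_div_two, curveSin]

theorem genSin_neg (t : ℝ) : genSin p (-t) = -genSin p t := by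
  simp [genSin, genAngle_neg, curveSin, circleNorm]

theorem genCos_neg (t : ℝ) : genCos p (-t) = genCos p t := by
  simp [genCos_eq, genAngle_neg, circleNorm]

theorem genSin_add_genPi (t : ℝ) : genSin p (t + genPi p) = -genSin p t := by
  simp [genSin, genAngle_add_genPi, curveSin, circleNorm]

theorem genCos_add_genPi (t : ℝ) : genCos p (t + genPi p) = -genCos p t := by
  simp [genCos_eq, genAngle_add_genPi, circleNorm]

variable {p} in
theorem exists_int_of_genSin_eq_zero {t : ℝ} (ht : genSin p t = 0) : ∃ k : ℤ, t = k * genPi p := by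
  obtain ⟨k, hk⟩ := Real.sin_eq_zero_iff.1
    ((mul_eq_zero.1 ht).resolve_left (Real.rpow_pos_of_pos (circleNorm_pos _) _).ne')
  exact ⟨k, by
    rw [genPi, ← flowTime_int_mul_pi (holderConjugate_conjExponent p), hk, flowTime_genAngle]⟩

section FirstQuarter

variable {p}

theorem genAngle_mem_Icc {t : ℝ} (ht : t ∈ Icc 0 (genPi p / 2)) :
    genAngle p t ∈ Icc 0 (Real.pi / 2) :=
  ⟨genAngle_zero p ▸ (genAngle p).monotone ht.1,
    genAngle_genPi_div_two p ▸ (genAngle p).monotone ht.2⟩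

theorem genSin_nonneg {t : ℝ} (ht : t ∈ Icc 0 (genPi p / 2)) : 0 ≤ genSin p t := by
  have hφ := genAngle_mem_Icc ht
  exact mul_nonneg (Real.rpow_nonneg (circleNorm_pos _).le _)
    (Real.sin_nonneg_of_nonneg_of_le_pi hφ.1 (by linarith [hφ.2, Real.pi_pos]))

theorem genCos_nonneg {t : ℝ} (ht : t ∈ Icc 0 (genPi p / 2)) : 0 ≤ genCos p t := by
  have hφ := genAngle_mem_Icc ht
  rw [genCos_eq]
  exact signedPow_nonneg _ (mul_nonneg (Real.rpow_nonneg (circleNorm_pos _).le _)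
    (Real.cos_nonneg_of_neg_pi_div_two_le_of_le (by linarith [hφ.1, Real.pi_pos]) hφ.2))

theorem genCos_antitoneOn : AntitoneOn (genCos p) (Icc 0 (genPi p / 2)) := by
  have h := holderConjugate_conjExponent p
  have hpow : AntitoneOn (fun t ↦ signedPow p (genCos p t)) (Icc 0 (genPi p / 2)) := by
    refine antitoneOn_of_hasDerivWithinAt_nonpos (convex_Icc _ _)
      (fun t _ ↦ (hasDerivAt_signedPow_genCos p t).continuousAt.continuousWithinAt)
      (fun t _ ↦ (hasDerivAt_signedPow_genCos p t).hasDerivWithinAt) fun t ht ↦ ?_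
    exact neg_nonpos.2 (mul_nonneg (sub_pos.2 hp.out).le
      (signedPow_nonneg p (genSin_nonneg (interior_subset ht))))
  intro s hs t ht hst
  rw [← signedPow_signedPow h (genCos p s), ← signedPow_signedPow h (genCos p t)]
  exact signedPow_monotoneOn h.symm.lt (signedPow_nonneg p (genCos_nonneg ht))
    (signedPow_nonneg p (genCos_nonneg hs)) (hpow hs ht hst)

theorem mul_genCos_le_genSin {t : ℝ} (ht : t ∈ Icc 0 (genPi p / 2)) :
    t * genCos p t ≤ genSin p t := by
  have := Convex.mul_sub_le_image_sub_of_le_deriv (convex_Icc 0 t) (f := genSin p)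
    (C := genCos p t) (fun x _ ↦ (hasDerivAt_genSin p x).continuousAt.continuousWithinAt)
    (fun x _ ↦ (hasDerivAt_genSin p x).differentiableAt.differentiableWithinAt)
    (fun x hx ↦ by
      have hx := interior_subset hx
      rw [(hasDerivAt_genSin p x).deriv]
      exact genCos_antitoneOn ⟨hx.1, hx.2.trans ht.2⟩ ht hx.2)
    0 (left_mem_Icc.2 ht.1) t (right_mem_Icc.2 ht.1) ht.1
  rwa [genSin_zero, sub_zero, sub_zero, mul_comm] at this

end FirstQuarter

end GeneralizedSine

section SinPow

variable (p : ℝ) [hp : Fact (1 < p)]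

/-- The nonlinearity `|genSin p t| ^ p` of the Prüfer angle equation. -/
noncomputable def sinPow (t : ℝ) : ℝ := |genSin p t| ^ p

/-- The derivative of `sinPow p`. -/
noncomputable def sinPowDeriv (t : ℝ) : ℝ := p * (signedPow p (genSin p t) * genCos p t)

theorem hasDerivAt_sinPow (t : ℝ) : HasDerivAt (sinPow p) (sinPowDeriv p t) t :=
  ((hasDerivAt_abs_rpow_signedPow hp.out _).comp t (hasDerivAt_genSin p t)).congr_deriv
    (mul_assoc _ _ _)

theorem continuous_sinPow : Continuous (sinPow p) :=
  continuous_iff_continuousAt.2 fun t ↦ (hasDerivAt_sinPow p t).continuousAt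

theorem continuous_sinPowDeriv : Continuous (sinPowDeriv p) := by
  have h := holderConjugate_conjExponent p
  have hsin : Continuous (genSin p) :=
    continuous_iff_continuousAt.2 fun t ↦ (hasDerivAt_genSin p t).continuousAt
  have hcosPow : Continuous fun t ↦ signedPow p (genCos p t) :=
    continuous_iff_continuousAt.2 fun t ↦ (hasDerivAt_signedPow_genCos p t).continuousAt
  have hcos : Continuous (genCos p) :=
    ((continuous_signedPow h.symm.lt).comp hcosPow).congr fun t ↦ signedPow_signedPow h _
  exact continuous_const.mul (((continuous_signedPow h.lt).comp hsin).mul hcos)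

theorem sinPow_nonneg (t : ℝ) : 0 ≤ sinPow p t := Real.rpow_nonneg (abs_nonneg _) _

theorem sinPow_add_abs_genCos_rpow (t : ℝ) : sinPow p t + |genCos p t| ^ p = 1 :=
  abs_genSin_rpow_add_abs_genCos_rpow p t

theorem sinPow_le_one (t : ℝ) : sinPow p t ≤ 1 := by
  linarith [sinPow_add_abs_genCos_rpow p t, Real.rpow_nonneg (abs_nonneg (genCos p t)) p]

theorem abs_sinPowDeriv_le (t : ℝ) : |sinPowDeriv p t| ≤ p := by
  have hp0 : 0 < p := by linarith [hp.out]
  have hsin : |genSin p t| ≤ 1 := by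
    simpa using (Real.rpow_le_rpow_iff (abs_nonneg _) zero_le_one hp0).1
      ((sinPow_le_one p t).trans_eq (Real.one_rpow p).symm)
  have hcos : |genCos p t| ≤ 1 := by
    refine (Real.rpow_le_rpow_iff (abs_nonneg _) zero_le_one hp0).1 ?_
    rw [Real.one_rpow]
    linarith [sinPow_add_abs_genCos_rpow p t, sinPow_nonneg p t]
  have hpow : |signedPow p (genSin p t)| ≤ 1 := by
    rw [abs_signedPow hp.out]
    exact Real.rpow_le_one (abs_nonneg _) hsin (sub_pos.2 hp.out).le
  rw [sinPowDeriv, abs_mul, abs_mul, abs_of_pos hp0]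
  exact mul_le_of_le_one_right hp0.le (mul_le_one₀ hpow (abs_nonneg _) hcos)

theorem abs_sinPow_sub_le (s t : ℝ) : |sinPow p s - sinPow p t| ≤ p * |s - t| :=
  Convex.norm_image_sub_le_of_norm_hasDerivWithin_le
    (fun x _ ↦ (hasDerivAt_sinPow p x).hasDerivWithinAt) (fun x _ ↦ abs_sinPowDeriv_le p x)
    convex_univ (mem_univ t) (mem_univ s)

theorem abs_mul_sinPow_sub_le {c M : ℝ} (hc : |c| ≤ M) (s t : ℝ) :
    |c * (sinPow p s - sinPow p t)| ≤ M * p * |s - t| := by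
  rw [abs_mul, mul_assoc]
  exact mul_le_mul hc (abs_sinPow_sub_le p s t) (abs_nonneg _) ((abs_nonneg c).trans hc)

theorem sinPow_periodic : Function.Periodic (sinPow p) (genPi p) := fun t ↦ by
  rw [sinPow, sinPow, genSin_add_genPi, abs_neg]

theorem sinPowDeriv_periodic : Function.Periodic (sinPowDeriv p) (genPi p) := fun t ↦ by
  rw [sinPowDeriv, sinPowDeriv, genSin_add_genPi, genCos_add_genPi, signedPow_neg, neg_mul_neg]

theorem sinPow_neg (t : ℝ) : sinPow p (-t) = sinPow p t := by
  rw [sinPow, sinPow, genSin_neg, abs_neg]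

theorem sinPowDeriv_neg (t : ℝ) : sinPowDeriv p (-t) = -sinPowDeriv p t := by
  rw [sinPowDeriv, sinPowDeriv, genSin_neg, genCos_neg, signedPow_neg]; ring

@[simp]
theorem sinPow_zero : sinPow p 0 = 0 := by
  rw [sinPow, genSin_zero, abs_zero, Real.zero_rpow (by linarith [hp.out])]

theorem sinPow_int_mul_genPi (k : ℤ) : sinPow p (k * genPi p) = 0 := by
  rw [(sinPow_periodic p).int_mul_eq, sinPow_zero]

theorem sinPow_genPi_div_two : sinPow p (genPi p / 2) = 1 := by
  have := sinPow_add_abs_genCos_rpow p (genPi p / 2)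
  rwa [genCos_genPi_div_two, abs_zero, Real.zero_rpow (by linarith [hp.out]), add_zero] at this

variable {p}

theorem exists_int_of_sinPow_eq_zero {t : ℝ} (h : sinPow p t = 0) : ∃ k : ℤ, t = k * genPi p :=
  exists_int_of_genSin_eq_zero
    (abs_eq_zero.1 ((Real.rpow_eq_zero (abs_nonneg _) (by linarith [hp.out])).1 h))

theorem sinPowDeriv_nonneg {t : ℝ} (ht : t ∈ Icc 0 (genPi p / 2)) : 0 ≤ sinPowDeriv p t :=
  mul_nonneg (by linarith [hp.out])
    (mul_nonneg (signedPow_nonneg p (genSin_nonneg ht)) (genCos_nonneg ht))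

theorem mul_sinPowDeriv_le {t : ℝ} (ht : |t| ≤ genPi p / 2) :
    t * sinPowDeriv p t ≤ p * sinPow p t := by
  have hnonneg : ∀ t ∈ Icc 0 (genPi p / 2), t * sinPowDeriv p t ≤ p * sinPow p t := fun t ht ↦ by
    have hp0 : 0 ≤ p := by linarith [hp.out]
    calc t * sinPowDeriv p t = p * (signedPow p (genSin p t) * (t * genCos p t)) := by
          rw [sinPowDeriv]; ring
      _ ≤ p * (signedPow p (genSin p t) * genSin p t) := by
          gcongr
          · exact signedPow_nonneg p (genSin_nonneg ht)
          · exact mul_genCos_le_genSin ht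
      _ = p * sinPow p t := by rw [signedPow_mul_self hp.out, sinPow]
  rcases le_total 0 t with h | h
  · exact hnonneg t ⟨h, (le_abs_self t).trans ht⟩
  · have := hnonneg (-t) ⟨neg_nonneg.2 h, (neg_le_abs t).trans ht⟩
    rwa [sinPowDeriv_neg, sinPow_neg, neg_mul_neg] at this

theorem sub_mul_sinPowDeriv_le (k : ℤ) {t : ℝ} (ht : |t - k * genPi p| ≤ genPi p / 2) :
    (t - k * genPi p) * sinPowDeriv p t ≤ p * sinPow p t := by
  have := mul_sinPowDeriv_le ht
  rwa [(sinPowDeriv_periodic p).sub_int_mul_eq, (sinPow_periodic p).sub_int_mul_eq] at this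

theorem sinPowDeriv_nonneg_of_mem_Icc (k : ℤ) {t : ℝ}
    (ht : t ∈ Icc (k * genPi p) (k * genPi p + genPi p / 2)) : 0 ≤ sinPowDeriv p t := by
  rw [← (sinPowDeriv_periodic p).sub_int_mul_eq k]
  exact sinPowDeriv_nonneg ⟨by linarith [ht.1], by linarith [ht.2]⟩

theorem sinPowDeriv_nonpos_of_mem_Icc (k : ℤ) {t : ℝ}
    (ht : t ∈ Icc (k * genPi p - genPi p / 2) (k * genPi p)) : sinPowDeriv p t ≤ 0 := by
  rw [← (sinPowDeriv_periodic p).sub_int_mul_eq k, ← neg_neg (t - _), sinPowDeriv_neg, neg_nonpos]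
  exact sinPowDeriv_nonneg ⟨by linarith [ht.2], by linarith [ht.1]⟩

end SinPow

section Comparison

variable {f g f' g' : ℝ → ℝ} {a b K : ℝ}

/- Adding a multiple of `exp ((K + 1) (x - a))` to `g` makes the differential inequality strict. -/
theorem le_of_deriv_sub_le (hf : ∀ x ∈ Icc a b, HasDerivAt f (f' x) x)
    (hg : ∀ x ∈ Icc a b, HasDerivAt g (g' x) x) (hfga : f a ≤ g a)
    (h : ∀ x ∈ Icc a b, g x ≤ f x → f' x - g' x ≤ K * (f x - g x)) :
    ∀ x ∈ Icc a b, f x ≤ g x := by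
  intro x hx
  have hexp : ∀ ε > 0, f x ≤ g x + ε * Real.exp ((K + 1) * (x - a)) := fun ε hε ↦ by
    have hB : ∀ y ∈ Icc a b, HasDerivAt (fun t ↦ g t + ε * Real.exp ((K + 1) * (t - a)))
        (g' y + ε * (Real.exp ((K + 1) * (y - a)) * (K + 1))) y := fun y hy ↦ by
      refine (hg y hy).add (HasDerivAt.const_mul ε (HasDerivAt.exp ?_))
      simpa using ((hasDerivAt_id y).sub_const a).const_mul (K + 1)
    refine image_le_of_deriv_right_lt_deriv_boundary'
      (fun y hy ↦ (hf y hy).continuousAt.continuousWithinAt)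
      (fun y hy ↦ (hf y (Ico_subset_Icc_self hy)).hasDerivWithinAt) ?_
      (fun y hy ↦ (hB y hy).continuousAt.continuousWithinAt)
      (fun y hy ↦ (hB y (Ico_subset_Icc_self hy)).hasDerivWithinAt) ?_ hx
    · have := Real.exp_pos ((K + 1) * (a - a))
      nlinarith
    · intro y hy hfy
      have hpos := mul_pos hε (Real.exp_pos ((K + 1) * (y - a)))
      have := h y (Ico_subset_Icc_self hy) (by linarith)
      rw [hfy] at this
      linarith
  refine le_of_forall_pos_le_add fun δ hδ ↦ ?_
  have := hexp (δ / Real.exp ((K + 1) * (x - a))) (by positivity)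
  rwa [div_mul_cancel₀ _ (Real.exp_pos _).ne'] at this

theorem monotoneOn_mul_exp_of_neg_mul_le_deriv (hf : ∀ x ∈ Icc a b, HasDerivAt f (f' x) x)
    (h : ∀ x ∈ Icc a b, -(K * f x) ≤ f' x) :
    MonotoneOn (fun x ↦ f x * Real.exp (K * x)) (Icc a b) := by
  have hd : ∀ x ∈ Icc a b, HasDerivAt (fun x ↦ f x * Real.exp (K * x))
      ((f' x + K * f x) * Real.exp (K * x)) x := fun x hx ↦
    ((hf x hx).mul (((hasDerivAt_id x).const_mul K).exp)).congr_deriv (by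
      simp only [id]
      ring)
  exact monotoneOn_of_hasDerivWithinAt_nonneg (convex_Icc a b)
    (fun x hx ↦ (hd x hx).continuousAt.continuousWithinAt)
    (fun x hx ↦ (hd x (interior_subset hx)).hasDerivWithinAt)
    fun x hx ↦ mul_nonneg (by linarith [h x (interior_subset hx)]) (Real.exp_pos _).le

theorem pos_of_nonneg_of_neg_mul_le_deriv (hab : a < b) (hf : ∀ x ∈ Icc a b, HasDerivAt f (f' x) x)
    (hf₀ : ∀ x ∈ Icc a b, 0 ≤ f x) (h : ∀ x ∈ Icc a b, -(K * f x) ≤ f' x)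
    (hlt : ∃ x ∈ Icc a b, -(K * f x) < f' x) : 0 < f b := by
  refine (hf₀ b (right_mem_Icc.2 hab.le)).lt_of_ne' fun hfb ↦ ?_
  have hzero : EqOn f 0 (Icc a b) := fun x hx ↦ by
    have := monotoneOn_mul_exp_of_neg_mul_le_deriv hf h hx (right_mem_Icc.2 hab.le) hx.2
    simp only [hfb, zero_mul] at this
    exact (nonpos_of_mul_nonpos_left this (Real.exp_pos _)).antisymm (hf₀ x hx)
  obtain ⟨x, hx, hlt⟩ := hlt
  have hf'x : f' x = 0 := (uniqueDiffOn_Icc hab x hx).eq_deriv _ (hf x hx).hasDerivWithinAt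
    ((hasDerivWithinAt_const x _ (0 : ℝ)).congr (fun _ hy ↦ hzero hy) (hzero hx))
  rw [hzero hx, hf'x] at hlt
  simp at hlt

theorem pos_of_abs_deriv_le (hf : ∀ x ∈ Icc a b, HasDerivAt f (f' x) x)
    (h : ∀ x ∈ Icc a b, |f' x| ≤ K * f x) {x₁ : ℝ} (hx₁ : x₁ ∈ Icc a b) (hfx₁ : 0 < f x₁) :
    ∀ x ∈ Icc a b, 0 < f x := by
  intro x hx
  have hinc := monotoneOn_mul_exp_of_neg_mul_le_deriv hf
    fun y hy ↦ neg_le_of_abs_le (h y hy)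
  have hdec := monotoneOn_mul_exp_of_neg_mul_le_deriv (K := -K) (fun y hy ↦ (hf y hy).neg)
    fun y hy ↦ (by simpa using le_of_abs_le (h y hy))
  rcases le_total x₁ x with hxx | hxx
  · exact pos_of_mul_pos_left ((mul_pos hfx₁ (Real.exp_pos _)).trans_le (hinc hx₁ hx hxx))
      (Real.exp_pos _).le
  · have := hdec hx hx₁ hxx
    simp only [Pi.neg_apply, neg_mul, neg_le_neg_iff] at this
    exact pos_of_mul_pos_left ((mul_pos hfx₁ (Real.exp_pos _)).trans_le this) (Real.exp_pos _).le

theorem exists_primitive_of_continuousOn (hab : a ≤ b) (hf : ContinuousOn f (Icc a b)) :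
    ∃ F : ℝ → ℝ, F a = 0 ∧ ∀ x ∈ Icc a b, HasDerivAt F (f x) x := by
  have hc : Continuous (IccExtend hab ((Icc a b).domRestrict f)) :=
    (continuousOn_iff_continuous_domRestrict.1 hf).Icc_extend'
  refine ⟨fun x ↦ ∫ t in a..x, IccExtend hab ((Icc a b).domRestrict f) t,
    intervalIntegral.integral_same, fun x hx ↦ ?_⟩
  have := intervalIntegral.integral_hasDerivAt_right (hc.intervalIntegrable a x)
    hc.aestronglyMeasurable.stronglyMeasurableAtFilter hc.continuousAt
  rwa [IccExtend_of_mem _ _ hx] at this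

theorem continuousOn_of_forall_hasDerivAt {s : Set ℝ} (hf : ∀ x ∈ s, HasDerivAt f (f' x) x) :
    ContinuousOn f s :=
  fun x hx ↦ (hf x hx).continuousAt.continuousWithinAt

end Comparison

/-- A Prüfer angle: the argument `θ` in the generalized polar coordinates
`(y, y') = ρ * (genSin p θ / z, genCos p θ)`, scaled by the frequency `z`, of a solution of
`-((y')^{(p - 1)})' = (p - 1) z ^ (p - 1) (z + k) y^{(p - 1)}`. -/
def IsPrueferAngle (p z : ℝ) [Fact (1 < p)] (k : ℝ → ℝ) (a b : ℝ) (θ : ℝ → ℝ) : Prop :=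
  ∀ x ∈ Icc a b, HasDerivAt θ (z + k x * sinPow p (θ x)) x

namespace IsPrueferAngle

variable {p : ℝ} [hp : Fact (1 < p)] {z z₁ z₂ a b : ℝ} {k k₁ k₂ θ θ₁ θ₂ : ℝ → ℝ}

theorem continuousOn (h : IsPrueferAngle p z k a b θ) : ContinuousOn θ (Icc a b) :=
  continuousOn_of_forall_hasDerivAt h

theorem mono {a' b' : ℝ} (h : IsPrueferAngle p z k a b θ) (hsub : Icc a' b' ⊆ Icc a b) :
    IsPrueferAngle p z k a' b' θ :=
  fun x hx ↦ h x (hsub hx)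

theorem congr (h : IsPrueferAngle p z k₁ a b θ) (hk : EqOn k₁ k₂ (Icc a b)) :
    IsPrueferAngle p z k₂ a b θ :=
  fun x hx ↦ by
    rw [← hk hx]
    exact h x hx

theorem monotoneOn (h : IsPrueferAngle p z k a b θ) (hz : 0 ≤ z) (hk : ∀ x ∈ Icc a b, 0 ≤ k x) :
    MonotoneOn θ (Icc a b) :=
  monotoneOn_of_hasDerivWithinAt_nonneg (convex_Icc a b) h.continuousOn
    (fun x hx ↦ (h x (interior_subset hx)).hasDerivWithinAt)
    fun x hx ↦ add_nonneg hz (mul_nonneg (hk x (interior_subset hx)) (sinPow_nonneg p _))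

theorem le (h₁ : IsPrueferAngle p z₁ k₁ a b θ₁) (h₂ : IsPrueferAngle p z₂ k₂ a b θ₂)
    (hk₁ : ContinuousOn k₁ (Icc a b)) (hz : z₁ ≤ z₂) (hk : ∀ x ∈ Icc a b, k₁ x ≤ k₂ x)
    (hθa : θ₁ a ≤ θ₂ a) : ∀ x ∈ Icc a b, θ₁ x ≤ θ₂ x := by
  obtain ⟨M, hM⟩ := isCompact_Icc.exists_bound_of_continuousOn hk₁
  refine le_of_deriv_sub_le (K := M * p) h₁ h₂ hθa fun x hx hle ↦ ?_
  have hLip := le_of_abs_le (abs_mul_sinPow_sub_le p (hM x hx) (θ₁ x) (θ₂ x))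
  rw [abs_of_nonneg (sub_nonneg.2 hle)] at hLip
  have := mul_le_mul_of_nonneg_right (hk x hx) (sinPow_nonneg p (θ₂ x))
  linarith

theorem eqOn (h₁ : IsPrueferAngle p z k a b θ₁) (h₂ : IsPrueferAngle p z k a b θ₂)
    (hk : ContinuousOn k (Icc a b)) (hθa : θ₁ a = θ₂ a) : EqOn θ₁ θ₂ (Icc a b) := fun x hx ↦
  le_antisymm (h₁.le h₂ hk le_rfl (fun _ _ ↦ le_rfl) hθa.le x hx)
    (h₂.le h₁ hk le_rfl (fun _ _ ↦ le_rfl) hθa.ge x hx)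

theorem nonneg (h : IsPrueferAngle p z k a b θ) (hk : ContinuousOn k (Icc a b)) (hz : 0 ≤ z)
    (hθa : 0 ≤ θ a) : ∀ x ∈ Icc a b, 0 ≤ θ x := by
  have hzero : IsPrueferAngle p 0 k a b 0 := fun x _ ↦
    (hasDerivAt_const x 0).congr_deriv (by simp)
  exact hzero.le h hk hz (fun _ _ ↦ le_rfl) hθa

theorem pos (h : IsPrueferAngle p z k a b θ) (hk : ContinuousOn k (Icc a b)) (hz : 0 < z)
    (hθa : θ a = 0) (hab : a < b) : 0 < θ b := by
  obtain ⟨M, hM⟩ := isCompact_Icc.exists_bound_of_continuousOn hk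
  have hnonneg := h.nonneg hk hz.le hθa.ge
  have hlt : ∀ x ∈ Icc a b, -(M * p * θ x) < z + k x * sinPow p (θ x) := fun x hx ↦ by
    have hLip := neg_le_of_abs_le (abs_mul_sinPow_sub_le p (hM x hx) (θ x) 0)
    rw [sinPow_zero, sub_zero, sub_zero, abs_of_nonneg (hnonneg x hx)] at hLip
    linarith
  exact pos_of_nonneg_of_neg_mul_le_deriv hab h hnonneg (fun x hx ↦ (hlt x hx).le)
    ⟨a, left_mem_Icc.2 hab.le, hlt a (left_mem_Icc.2 hab.le)⟩

theorem exists_sinPow_pos (h : IsPrueferAngle p z k a b θ) (hk : ContinuousOn k (Icc a b))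
    (hz : 0 < z) (hθa : θ a = 0) (hab : a < b) : ∃ x ∈ Icc a b, 0 < sinPow p (θ x) := by
  have hπ := genPi_pos p
  have hmin : 0 < min (θ b) (genPi p) := lt_min (h.pos hk hz hθa hab) hπ
  obtain ⟨x, hx, hθx⟩ := intermediate_value_Icc hab.le h.continuousOn
    (show min (θ b) (genPi p) / 2 ∈ Icc (θ a) (θ b) from
      ⟨by linarith, by linarith [min_le_left (θ b) (genPi p)]⟩)
  refine ⟨x, hx, (sinPow_nonneg p _).lt_of_ne' fun hzero ↦ ?_⟩
  obtain ⟨j, hj⟩ := exists_int_of_sinPow_eq_zero hzero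
  rw [hθx] at hj
  have h0 : (0 : ℝ) < j := pos_of_mul_pos_left (hj ▸ half_pos hmin) hπ.le
  have h1 : (1 : ℝ) ≤ j := by exact_mod_cast (Int.cast_pos.1 h0 : 0 < j)
  nlinarith [min_le_right (θ b) (genPi p)]

theorem le_genPi_div_two (h : IsPrueferAngle p z k a b θ) (hk : ContinuousOn k (Icc a b))
    (hkz : ∀ x ∈ Icc a b, k x ≤ -z) (hθa : θ a = 0) : ∀ x ∈ Icc a b, θ x ≤ genPi p / 2 := by
  have hhalf : IsPrueferAngle p z (fun _ ↦ -z) a b (fun _ ↦ genPi p / 2) := fun x _ ↦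
    (hasDerivAt_const x _).congr_deriv (by simp [sinPow_genPi_div_two])
  exact h.le hhalf hk le_rfl hkz (by linarith [genPi_pos p])

theorem lt (h₁ : IsPrueferAngle p z k₁ a b θ₁) (h₂ : IsPrueferAngle p z k₂ a b θ₂)
    (hk₁ : ContinuousOn k₁ (Icc a b)) (hk₂ : ContinuousOn k₂ (Icc a b)) (hz : 0 < z)
    (hk : ∀ x ∈ Icc a b, k₁ x < k₂ x) (hθ₁a : θ₁ a = 0) (hθ₂a : θ₂ a = 0) (hab : a < b) :
    θ₁ b < θ₂ b := by
  obtain ⟨M, hM⟩ := isCompact_Icc.exists_bound_of_continuousOn hk₁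
  have hle := h₁.le h₂ hk₁ le_rfl (fun x hx ↦ (hk x hx).le) (hθ₁a.trans hθ₂a.symm).le
  have hderiv : ∀ x ∈ Icc a b, -(M * p * (θ₂ x - θ₁ x)) + (k₂ x - k₁ x) * sinPow p (θ₂ x) ≤
      z + k₂ x * sinPow p (θ₂ x) - (z + k₁ x * sinPow p (θ₁ x)) := fun x hx ↦ by
    have hLip := neg_le_of_abs_le (abs_mul_sinPow_sub_le p (hM x hx) (θ₂ x) (θ₁ x))
    rw [abs_of_nonneg (sub_nonneg.2 (hle x hx))] at hLip
    linarith
  obtain ⟨x, hx, hsin⟩ := h₂.exists_sinPow_pos hk₂ hz hθ₂a hab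
  refine sub_pos.1 (pos_of_nonneg_of_neg_mul_le_deriv (f := fun x ↦ θ₂ x - θ₁ x) (K := M * p) hab
    (fun x hx ↦ (h₂ x hx).fun_sub (h₁ x hx)) (fun x hx ↦ sub_nonneg.2 (hle x hx))
    (fun x hx ↦ ?_) ⟨x, hx, ?_⟩)
  · have := mul_nonneg (sub_nonneg.2 (hk x hx).le) (sinPow_nonneg p (θ₂ x))
    linarith [hderiv x hx]
  · have := mul_pos (sub_pos.2 (hk x hx)) hsin
    linarith [hderiv x hx]

theorem exists_of_continuousOn (hab : a ≤ b) (z : ℝ) {k : ℝ → ℝ} (hk : ContinuousOn k (Icc a b)) :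
    ∃ θ : ℝ → ℝ, θ a = 0 ∧ IsPrueferAngle p z k a b θ := by
  set e := IccExtend hab ((Icc a b).domRestrict k)
  have he : Continuous e := (continuousOn_iff_continuous_domRestrict.1 hk).Icc_extend'
  obtain ⟨M, hM⟩ := isCompact_Icc.exists_bound_of_continuousOn hk
  have hM0 : 0 ≤ M := (norm_nonneg _).trans (hM a (left_mem_Icc.2 hab))
  have heM : ∀ t, |e t| ≤ M := fun t ↦ hM _ (projIcc a b hab t).2
  have hP : IsPicardLindelof (fun t y ↦ z + e t * sinPow p y) (tmin := a - 1) (tmax := b + 1)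
      ⟨a, by constructor <;> linarith⟩ 0 ((‖z‖₊ + M.toNNReal) * (b + 1 - a).toNNReal) 0
      (‖z‖₊ + M.toNNReal) (M * p).toNNReal := by
    refine ⟨fun t _ ↦ LipschitzOnWith.of_dist_le' fun x _ y _ ↦ ?_, fun x _ ↦ by fun_prop,
      fun t _ x _ ↦ ?_, ?_⟩
    · rw [Real.dist_eq, Real.dist_eq, add_sub_add_left_eq_sub, ← mul_sub]
      exact abs_mul_sinPow_sub_le p (heM t) x y
    · rw [NNReal.coe_add, Real.coe_toNNReal _ hM0, coe_nnnorm]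
      refine norm_add_le_of_le le_rfl ?_
      rw [Real.norm_eq_abs, abs_mul, abs_of_nonneg (sinPow_nonneg p x)]
      exact (mul_le_of_le_one_right (abs_nonneg _) (sinPow_le_one p x)).trans (heM t)
    · rw [NNReal.coe_mul, Real.coe_toNNReal _ (by linarith), NNReal.coe_zero, sub_zero]
      exact mul_le_mul_of_nonneg_left (max_le (by linarith) (by linarith)) NNReal.zero_le_coe
  obtain ⟨θ, hθa, hθ⟩ := hP.exists_eq_forall_mem_Icc_hasDerivWithinAt₀
  refine ⟨θ, hθa, fun x hx ↦ ?_⟩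
  have := (hθ x ⟨by linarith [hx.1], by linarith [hx.2]⟩).hasDerivAt
    (Icc_mem_nhds (by linarith [hx.1]) (by linarith [hx.2]))
  rwa [show e x = k x from IccExtend_of_mem _ _ hx] at this

theorem dist_le_gronwallBound {z₁ z₂ ε M : ℝ} {k₁ k₂ θ₁ θ₂ : ℝ → ℝ}
    (h₁ : IsPrueferAngle p z₁ k₁ a b θ₁) (h₂ : IsPrueferAngle p z₂ k₂ a b θ₂)
    (hM : ∀ x ∈ Icc a b, |k₂ x| ≤ M) (hz : |z₁ - z₂| ≤ ε) (hk : ∀ x ∈ Icc a b, |k₁ x - k₂ x| ≤ ε)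
    (hθa : θ₁ a = θ₂ a) (hab : a ≤ b) :
    dist (θ₁ b) (θ₂ b) ≤ gronwallBound 0 (M * p).toNNReal (ε + ε) (b - a) := by
  have hε := dist_le_of_approx_trajectories_ODE_of_mem (s := fun _ ↦ univ) (εg := 0)
    (v := fun x y ↦ z₂ + k₂ x * sinPow p y) (K := (M * p).toNNReal) (εf := ε + ε)
    (fun x hx ↦ LipschitzOnWith.of_dist_le' fun s _ t _ ↦ ?_) h₁.continuousOn
    (fun x hx ↦ (h₁ x (Ico_subset_Icc_self hx)).hasDerivWithinAt) (fun x hx ↦ ?_)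
    (fun _ _ ↦ mem_univ _) h₂.continuousOn
    (fun x hx ↦ (h₂ x (Ico_subset_Icc_self hx)).hasDerivWithinAt) (fun _ _ ↦ (dist_self _).le)
    (fun _ _ ↦ mem_univ _) (dist_le_zero.2 hθa) b (right_mem_Icc.2 hab)
  · rwa [add_zero] at hε
  · rw [Real.dist_eq, Real.dist_eq, add_sub_add_left_eq_sub, ← mul_sub]
    exact abs_mul_sinPow_sub_le p (hM x (Ico_subset_Icc_self hx)) s t
  · rw [Real.dist_eq, add_sub_add_comm, ← sub_mul]
    refine (abs_add_le _ _).trans (add_le_add hz ?_)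
    rw [abs_mul, abs_of_nonneg (sinPow_nonneg p _)]
    exact (mul_le_of_le_one_right (abs_nonneg _) (sinPow_le_one p _)).trans
      (hk x (Ico_subset_Icc_self hx))

theorem continuousOn_apply_right {U : Set ℝ} {z : ℝ → ℝ} {k θ : ℝ → ℝ → ℝ} (hab : a ≤ b)
    (hz : ContinuousOn z U) (hk : ContinuousOn k.uncurry (U ×ˢ Icc a b))
    (hθa : ∀ τ ∈ U, θ τ a = 0) (hθ : ∀ τ ∈ U, IsPrueferAngle p (z τ) (k τ) a b (θ τ)) :
    ContinuousOn (fun τ ↦ θ τ b) U := by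
  intro σ hσ
  have hkσ : ContinuousOn (k σ) (Icc a b) := hk.uncurry_left σ hσ
  obtain ⟨M, hM⟩ := isCompact_Icc.exists_bound_of_continuousOn hkσ
  refine Metric.tendsto_nhds.2 fun η hη ↦ ?_
  have hlim : Tendsto (fun ε ↦ gronwallBound 0 (M * p).toNNReal (ε + ε) (b - a))
      (𝓝[>] 0) (𝓝 0) := by
    have hc : Continuous fun ε ↦ gronwallBound 0 (M * p).toNNReal (ε + ε) (b - a) :=
      (gronwallBound_continuous_ε 0 _ _).comp (continuous_id.add continuous_id)
    simpa [gronwallBound_ε0_δ0] using (hc.tendsto 0).mono_left nhdsWithin_le_nhds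
  obtain ⟨ε, hεη, hε⟩ := ((hlim.eventually_lt_const hη).and self_mem_nhdsWithin).exists
  obtain ⟨V, hV, hkV⟩ := isCompact_Icc.mem_uniformity_of_prod hk hσ (Metric.dist_mem_uniformity hε)
  filter_upwards [self_mem_nhdsWithin, hV, Metric.tendsto_nhds.1 (hz σ hσ) ε hε] with τ hτ hτV hzτ
  exact (dist_le_gronwallBound (hθ τ hτ) (hθ σ hσ) hM hzτ.le (fun x hx ↦ (hkV τ hτV x hx).le)
    ((hθa τ hτ).trans (hθa σ hσ).symm) hab).trans_lt hεη

end IsPrueferAngle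

/-- The `p`-th power `R` of the amplitude in the generalized polar coordinates that belong to the
Prüfer angle `θ`; its inverse is an integrating factor of the linearized angle equation. -/
structure IsPrueferAmplitude (p : ℝ) [Fact (1 < p)] (k : ℝ → ℝ) (a b : ℝ) (θ R : ℝ → ℝ) :
    Prop where
  pos : ∀ x ∈ Icc a b, 0 < R x
  hasDerivAt : ∀ x ∈ Icc a b, HasDerivAt R (-(k x * sinPowDeriv p (θ x) * R x)) x

theorem exists_crossing_of_monotoneOn {f : ℝ → ℝ} {a b c : ℝ} (hab : a ≤ b)
    (hf : ContinuousOn f (Icc a b)) (hmono : MonotoneOn f (Icc a b)) (hc : f a ≤ c) :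
    ∃ w ∈ Icc a b, (∀ x ∈ Icc a b, x ≤ w → f x ≤ c) ∧ ∀ x ∈ Icc a b, w < x → c ≤ f x := by
  rcases le_total (f b) c with hbc | hcb
  · exact ⟨b, right_mem_Icc.2 hab, fun x hx hxb ↦ (hmono hx (right_mem_Icc.2 hab) hxb).trans hbc,
      fun x hx hbx ↦ absurd hx.2 hbx.not_ge⟩
  · obtain ⟨w, hw, rfl⟩ := intermediate_value_Icc hab hf ⟨hc, hcb⟩
    exact ⟨w, hw, fun x hx hxw ↦ hmono hx hw hxw, fun x hx hwx ↦ hmono hw hx hwx.le⟩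

namespace IsPrueferAmplitude

variable {p : ℝ} [hp : Fact (1 < p)] {z a b : ℝ} {k θ R I : ℝ → ℝ}

theorem mono {a' b' : ℝ} (h : IsPrueferAmplitude p k a b θ R) (hsub : Icc a' b' ⊆ Icc a b) :
    IsPrueferAmplitude p k a' b' θ R :=
  ⟨fun x hx ↦ h.pos x (hsub hx), fun x hx ↦ h.hasDerivAt x (hsub hx)⟩

theorem continuousOn (h : IsPrueferAmplitude p k a b θ R) : ContinuousOn R (Icc a b) :=
  continuousOn_of_forall_hasDerivAt h.hasDerivAt

theorem exists_of_continuousOn (hab : a ≤ b) (hk : ContinuousOn k (Icc a b))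
    (hθ : ContinuousOn θ (Icc a b)) : ∃ R : ℝ → ℝ, IsPrueferAmplitude p k a b θ R := by
  have hs := continuous_sinPowDeriv p
  obtain ⟨A, -, hA⟩ := exists_primitive_of_continuousOn hab
    (f := fun x ↦ -(k x * sinPowDeriv p (θ x))) (by fun_prop)
  exact ⟨fun x ↦ Real.exp (A x), fun x _ ↦ Real.exp_pos _,
    fun x hx ↦ (hA x hx).exp.congr_deriv (by ring)⟩

/- On this half turn the weight `k` is larger before `θ` crosses `j * genPi p`, while `R` grows,
than after, while `R` decays. With `w` the crossing point this is the monotonicity of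
`R * (z + k w * sinPow p θ)`. -/
theorem le_of_halfTurn (h : IsPrueferAmplitude p k a b θ R) (hθ : IsPrueferAngle p z k a b θ)
    (hz : 0 < z) (hk₀ : ∀ x ∈ Icc a b, 0 ≤ k x) (hk : AntitoneOn k (Icc a b)) (hab : a ≤ b)
    {j : ℤ} (ha : θ a = j * genPi p - genPi p / 2) (hb : θ b ≤ j * genPi p + genPi p / 2) :
    R a ≤ R b := by
  have hmono := hθ.monotoneOn hz.le hk₀
  have haI := left_mem_Icc.2 hab
  have hbI := right_mem_Icc.2 hab
  obtain ⟨w, hw, hle, hge⟩ := exists_crossing_of_monotoneOn hab hθ.continuousOn hmono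
    (c := j * genPi p) (by linarith [genPi_pos p])
  have hsign : ∀ x ∈ Icc a b, 0 ≤ sinPowDeriv p (θ x) * (k w - k x) := fun x hx ↦ by
    rcases le_or_gt x w with hxw | hwx
    · exact mul_nonneg_of_nonpos_of_nonpos
        (sinPowDeriv_nonpos_of_mem_Icc j ⟨ha.ge.trans (hmono haI hx hx.1), hle x hx hxw⟩)
        (sub_nonpos.2 (hk hx hw hxw))
    · exact mul_nonneg
        (sinPowDeriv_nonneg_of_mem_Icc j ⟨hge x hx hwx, (hmono hx hbI hx.2).trans hb⟩)
        (sub_nonneg.2 (hk hw hx hwx.le))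
  have hderiv : ∀ x ∈ Icc a b, HasDerivAt (fun x ↦ R x * (z + k w * sinPow p (θ x)))
      (R x * z * (sinPowDeriv p (θ x) * (k w - k x))) x := fun x hx ↦
    ((h.hasDerivAt x hx).fun_mul ((((hasDerivAt_sinPow p _).comp x (hθ x hx)).const_mul
      (k w)).const_add z)).congr_deriv (by
        simp only [Function.comp_apply]
        ring)
  have hR := monotoneOn_of_hasDerivWithinAt_nonneg (convex_Icc a b)
    (continuousOn_of_forall_hasDerivAt hderiv)
    (fun x hx ↦ (hderiv x (interior_subset hx)).hasDerivWithinAt)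
    (fun x hx ↦ mul_nonneg (mul_nonneg (h.pos x (interior_subset hx)).le hz.le)
      (hsign x (interior_subset hx))) haI hbI hab
  have hsa : sinPow p (θ a) = 1 := by
    rw [ha, ← sinPow_neg, neg_sub, (sinPow_periodic p).sub_int_mul_eq, sinPow_genPi_div_two]
  have hsb := mul_le_mul_of_nonneg_left (sinPow_le_one p (θ b)) (hk₀ w hw)
  have hRb := mul_le_mul_of_nonneg_left (add_le_add_right hsb z) (h.pos b hbI).le
  beta_reduce at hR
  rw [hsa] at hR
  exact le_of_mul_le_mul_right (hR.trans hRb) (by linarith [hk₀ w hw])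

theorem add_const_mul_le_of_halfTurn (h : IsPrueferAmplitude p k a b θ R)
    (hθ : MonotoneOn θ (Icc a b)) (hk₀ : ∀ x ∈ Icc a b, 0 ≤ k x)
    (hI : ∀ x ∈ Icc a b,
      HasDerivAt I (k x * R x * (θ x * sinPowDeriv p (θ x) - p * sinPow p (θ x))) x)
    (hab : a ≤ b) {j : ℤ} (ha : j * genPi p - genPi p / 2 ≤ θ a)
    (hb : θ b ≤ j * genPi p + genPi p / 2) :
    I b + j * genPi p * R b ≤ I a + j * genPi p * R a := by
  have haI := left_mem_Icc.2 hab
  have hbI := right_mem_Icc.2 hab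
  have hderiv : ∀ x ∈ Icc a b, HasDerivAt (fun x ↦ I x + j * genPi p * R x)
      (k x * R x * ((θ x - j * genPi p) * sinPowDeriv p (θ x) - p * sinPow p (θ x))) x :=
    fun x hx ↦ ((hI x hx).fun_add ((h.hasDerivAt x hx).const_mul _)).congr_deriv (by ring)
  refine antitoneOn_of_hasDerivWithinAt_nonpos (convex_Icc a b)
    (continuousOn_of_forall_hasDerivAt hderiv)
    (fun x hx ↦ (hderiv x (interior_subset hx)).hasDerivWithinAt) (fun x hx ↦ ?_) haI hbI hab
  replace hx := interior_subset hx
  refine mul_nonpos_of_nonneg_of_nonpos (mul_nonneg (hk₀ x hx) (h.pos x hx).le)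
    (sub_nonpos.2 (sub_mul_sinPowDeriv_le j (abs_le.2 ⟨?_, ?_⟩)))
  · linarith [hθ haI hx hx.1]
  · linarith [hθ hx hbI hx.2]

/- On the `j`-th half turn `I + j * genPi p * R` decreases, while `R` does not decrease over a
complete half turn. -/
theorem weighted_integral_nonpos_of_le (h : IsPrueferAmplitude p k a b θ R)
    (hθ : IsPrueferAngle p z k a b θ) (hz : 0 < z) (hk₀ : ∀ x ∈ Icc a b, 0 ≤ k x)
    (hk : AntitoneOn k (Icc a b)) (hab : a ≤ b) (hθa : θ a = 0) (hIa : I a = 0)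
    (hI : ∀ x ∈ Icc a b,
      HasDerivAt I (k x * R x * (θ x * sinPowDeriv p (θ x) - p * sinPow p (θ x))) x)
    (j : ℕ) (hθb : θ b ≤ j * genPi p + genPi p / 2) : I b ≤ 0 := by
  have hπ := genPi_pos p
  have hmono := hθ.monotoneOn hz.le hk₀
  induction j generalizing b with
  | zero =>
    simpa [hIa] using
      h.add_const_mul_le_of_halfTurn hmono hk₀ hI hab (j := 0)
        (by simpa [hθa] using (half_pos hπ).le) (by simpa using hθb)
  | succ j ih =>
    rcases le_total (θ b) (j * genPi p + genPi p / 2) with hle | hge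
    · exact ih h hθ hk₀ hk hab hI hle hmono
    obtain ⟨y, hy, hθy⟩ := intermediate_value_Icc hab hθ.continuousOn
      ⟨by rw [hθa]; positivity, hge⟩
    have hl : Icc a y ⊆ Icc a b := Icc_subset_Icc_right hy.2
    have hr : Icc y b ⊆ Icc a b := Icc_subset_Icc_left hy.1
    have hIy : I y ≤ 0 := ih (h.mono hl) (hθ.mono hl) (fun x hx ↦ hk₀ x (hl hx)) (hk.mono hl) hy.1
      (fun x hx ↦ hI x (hl hx)) hθy.le (hmono.mono hl)
    have hθy' : θ y = (j + 1 : ℤ) * genPi p - genPi p / 2 := by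
      rw [hθy]; push_cast; ring
    have hθb' : θ b ≤ (j + 1 : ℤ) * genPi p + genPi p / 2 := by simpa using hθb
    have hR : R y ≤ R b := (h.mono hr).le_of_halfTurn (hθ.mono hr) hz (fun x hx ↦ hk₀ x (hr hx))
      (hk.mono hr) hy.2 hθy' hθb'
    have hIR := (h.mono hr).add_const_mul_le_of_halfTurn (hmono.mono hr)
      (fun x hx ↦ hk₀ x (hr hx)) (fun x hx ↦ hI x (hr hx)) hy.2 hθy'.ge hθb'
    have := mul_le_mul_of_nonneg_left hR
      (mul_nonneg (by positivity : (0 : ℝ) ≤ (j + 1 : ℤ)) hπ.le)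
    linarith

theorem weighted_integral_nonpos (h : IsPrueferAmplitude p k a b θ R)
    (hθ : IsPrueferAngle p z k a b θ) (hz : 0 < z) (hk₀ : ∀ x ∈ Icc a b, 0 ≤ k x)
    (hk : AntitoneOn k (Icc a b)) (hab : a ≤ b) (hθa : θ a = 0) (hIa : I a = 0)
    (hI : ∀ x ∈ Icc a b,
      HasDerivAt I (k x * R x * (θ x * sinPowDeriv p (θ x) - p * sinPow p (θ x))) x) :
    I b ≤ 0 := by
  have hπ := genPi_pos p
  obtain ⟨j, hj⟩ := exists_nat_ge (θ b / genPi p)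
  rw [div_le_iff₀ hπ] at hj
  exact h.weighted_integral_nonpos_of_le hθ hz hk₀ hk hab hθa hIa hI j (by linarith)

end IsPrueferAmplitude

section Rescaled

variable {p : ℝ} [hp : Fact (1 < p)] {z a b : ℝ} {Q ψ φ v : ℝ → ℝ}

/-- The nonlinearity of the equation `φ' = 1 + Q * scaledSinPow p z φ` of the rescaled Prüfer angle
`φ = θ / z` with potential `Q`. -/
noncomputable def scaledSinPow (p : ℝ) [Fact (1 < p)] (z y : ℝ) : ℝ :=
  z ^ (-p) * sinPow p (z * y)

/-- The derivative of `scaledSinPow p` at `(z, y)` in the direction `(1, w)`. -/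
noncomputable def scaledSinPowDeriv (p : ℝ) [Fact (1 < p)] (z y w : ℝ) : ℝ :=
  -p * z ^ (-p - 1) * sinPow p (z * y) + z ^ (-p) * (sinPowDeriv p (z * y) * (y + z * w))

theorem hasDerivAt_scaledSinPow_line (y w : ℝ) {τ : ℝ} (hτ : 0 < z + τ) :
    HasDerivAt (fun τ ↦ scaledSinPow p (z + τ) (y + τ * w))
      (scaledSinPowDeriv p (z + τ) (y + τ * w) w) τ := by
  have hz : HasDerivAt (fun τ : ℝ ↦ z + τ) 1 τ := (hasDerivAt_id τ).const_add z
  have hy : HasDerivAt (fun τ ↦ y + τ * w) w τ := by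
    simpa using ((hasDerivAt_id τ).mul_const w).const_add y
  refine ((hz.rpow_const (p := -p) (.inl hτ.ne')).fun_mul
    ((hasDerivAt_sinPow p _).comp τ (hz.fun_mul hy))).congr_deriv ?_
  simp only [scaledSinPowDeriv, Function.comp_apply]
  ring

theorem scaledSinPow_sub_le (hz : 0 < z) {s t : ℝ} (hts : t ≤ s) :
    scaledSinPow p z s - scaledSinPow p z t ≤ z ^ (-p) * (p * z) * (s - t) := by
  have h := (le_abs_self _).trans (abs_sinPow_sub_le p (z * s) (z * t))
  rw [← mul_sub, abs_of_nonneg (mul_nonneg hz.le (sub_nonneg.2 hts))] at h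
  simp only [scaledSinPow, ← mul_sub]
  calc z ^ (-p) * (sinPow p (z * s) - sinPow p (z * t))
      ≤ z ^ (-p) * (p * (z * (s - t))) := mul_le_mul_of_nonneg_left h (by positivity)
    _ = z ^ (-p) * (p * z) * (s - t) := by ring

theorem continuousOn_scaledSinPowDeriv_line (hz : 0 < z) (hφ : ContinuousOn φ (Icc a b))
    (hv : ContinuousOn v (Icc a b)) :
    ContinuousOn (fun y : ℝ × ℝ ↦ scaledSinPowDeriv p (z + y.1) (φ y.2 + y.1 * v y.2) (v y.2))
      (Icc 0 1 ×ˢ Icc a b) := by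
  have hφ' : ContinuousOn (fun y : ℝ × ℝ ↦ φ y.2) (Icc 0 1 ×ˢ Icc a b) :=
    hφ.comp continuousOn_snd fun y hy ↦ hy.2
  have hv' : ContinuousOn (fun y : ℝ × ℝ ↦ v y.2) (Icc 0 1 ×ˢ Icc a b) :=
    hv.comp continuousOn_snd fun y hy ↦ hy.2
  have hrpow (e : ℝ) : ContinuousOn (fun y : ℝ × ℝ ↦ (z + y.1) ^ e) (Icc 0 1 ×ˢ Icc a b) :=
    (continuousOn_const.add continuousOn_fst).rpow_const
      fun y hy ↦ .inl (add_pos_of_pos_of_nonneg hz hy.1.1).ne'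
  have hz' : ContinuousOn (fun y : ℝ × ℝ ↦ z + y.1) (Icc 0 1 ×ˢ Icc a b) := by fun_prop
  have hline := hφ'.add (continuousOn_fst.mul hv')
  have harg := hz'.mul hline
  exact ((continuousOn_const.mul (hrpow _)).mul ((continuous_sinPow p).comp_continuousOn harg)).add
    ((hrpow _).mul (((continuous_sinPowDeriv p).comp_continuousOn harg).mul
      (hline.add (hz'.mul hv'))))

theorem exists_scaledSinPow_line_le (hz : 0 < z) (hφ : ContinuousOn φ (Icc a b))
    (hv : ContinuousOn v (Icc a b)) {ε : ℝ} (hε : 0 < ε) :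
    ∃ δ₀ > 0, ∀ δ ∈ Ioo 0 δ₀, ∀ x ∈ Icc a b, scaledSinPow p (z + δ) (φ x + δ * v x) ≤
      scaledSinPow p z (φ x) + δ * (scaledSinPowDeriv p z (φ x) (v x) + ε) := by
  obtain ⟨δ₁, hδ₁, hunif⟩ := Metric.uniformContinuousOn_iff.1
    ((isCompact_Icc.prod isCompact_Icc).uniformContinuousOn_of_continuous
      (continuousOn_scaledSinPowDeriv_line (p := p) hz hφ hv)) ε hε
  refine ⟨min δ₁ 1, by positivity, fun δ hδ x hx ↦ ?_⟩
  have hle : ∀ τ ∈ Icc 0 δ, scaledSinPowDeriv p (z + τ) (φ x + τ * v x) (v x) ≤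
      scaledSinPowDeriv p z (φ x) (v x) + ε := fun τ hτ ↦ by
    have hdist : dist (τ, x) (0, x) < δ₁ := by
      rw [dist_prod_same_right, Real.dist_0_eq_abs, abs_of_nonneg hτ.1]
      exact hτ.2.trans_lt (hδ.2.trans_le (min_le_left _ _))
    have := le_of_abs_le (hunif (τ, x) ⟨⟨hτ.1, hτ.2.trans (hδ.2.le.trans (min_le_right _ _))⟩, hx⟩
      (0, x) ⟨by simp, hx⟩ hdist).le
    simp only [add_zero, zero_mul] at this
    linarith
  have h0 : (0 : ℝ) ∈ Icc 0 δ := left_mem_Icc.2 hδ.1.le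
  have hderiv : ∀ τ ∈ Icc 0 δ, HasDerivAt (fun τ ↦ τ * (scaledSinPowDeriv p z (φ x) (v x) + ε) -
      scaledSinPow p (z + τ) (φ x + τ * v x)) (1 * (scaledSinPowDeriv p z (φ x) (v x) + ε) -
      scaledSinPowDeriv p (z + τ) (φ x + τ * v x) (v x)) τ := fun τ hτ ↦
    ((hasDerivAt_id τ).mul_const _).fun_sub
      (hasDerivAt_scaledSinPow_line (φ x) (v x) (add_pos_of_pos_of_nonneg hz hτ.1))
  have := monotoneOn_of_hasDerivWithinAt_nonneg (convex_Icc 0 δ)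
    (continuousOn_of_forall_hasDerivAt hderiv)
    (fun τ hτ ↦ (hderiv τ (interior_subset hτ)).hasDerivWithinAt)
    (fun τ hτ ↦ by linarith [hle τ (interior_subset hτ)]) h0 (right_mem_Icc.2 hδ.1.le) hδ.1.le
  simp only [zero_mul, add_zero] at this
  linarith

namespace IsPrueferAngle

theorem hasDerivAt_div (hz : 0 < z) (h : IsPrueferAngle p z (fun x ↦ z ^ (1 - p) * Q x) a b ψ)
    {x : ℝ} (hx : x ∈ Icc a b) :
    HasDerivAt (fun x ↦ ψ x / z) (1 + Q x * scaledSinPow p z (ψ x / z)) x := by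
  refine ((h x hx).div_const z).congr_deriv ?_
  rw [scaledSinPow, mul_div_cancel₀ _ hz.ne', show 1 - p = -p + 1 by ring,
    Real.rpow_add_one hz.ne']
  field_simp

/- The solution of the linearized equation, with `ε` added as a margin: variation of constants
gives `v * R = z⁻² * I + ε * J`, where `I b ≤ 0` by `weighted_integral_nonpos`. -/
theorem exists_linearization (hab : a ≤ b) (hz : 0 < z) (hQc : ContinuousOn Q (Icc a b))
    (hQ₀ : ∀ x ∈ Icc a b, 0 ≤ Q x) (hQ : AntitoneOn Q (Icc a b))
    (h : IsPrueferAngle p z (fun x ↦ z ^ (1 - p) * Q x) a b ψ) (hψa : ψ a = 0) :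
    ∃ C ≥ 0, ∀ ε, ∃ v : ℝ → ℝ, v a = 0 ∧ v b ≤ ε * C ∧ ∀ x ∈ Icc a b,
      HasDerivAt v (Q x * (scaledSinPowDeriv p z (ψ x / z) (v x) + ε)) x := by
  have hψc := h.continuousOn
  have hs := continuous_sinPow p
  have hds := continuous_sinPowDeriv p
  have hbI := right_mem_Icc.2 hab
  have hzp : 0 < z ^ (1 - p) := Real.rpow_pos_of_pos hz _
  obtain ⟨R, hR⟩ := IsPrueferAmplitude.exists_of_continuousOn (p := p)
    (k := fun x ↦ z ^ (1 - p) * Q x) hab (by fun_prop) hψc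
  have hRc := hR.continuousOn
  obtain ⟨I, hIa, hI⟩ := exists_primitive_of_continuousOn hab (f := fun x ↦ z ^ (1 - p) * Q x *
    R x * (ψ x * sinPowDeriv p (ψ x) - p * sinPow p (ψ x))) (by fun_prop)
  obtain ⟨J, hJa, hJ⟩ := exists_primitive_of_continuousOn hab (f := fun x ↦ Q x * R x)
    (by fun_prop)
  have hIb : I b ≤ 0 := hR.weighted_integral_nonpos h hz
    (fun x hx ↦ mul_nonneg hzp.le (hQ₀ x hx))
    (fun x hx y hy hxy ↦ mul_le_mul_of_nonneg_left (hQ hx hy hxy) hzp.le) hab hψa hIa hI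
  have hJb : 0 ≤ J b := by
    rw [← hJa]
    exact monotoneOn_of_hasDerivWithinAt_nonneg (convex_Icc a b)
      (continuousOn_of_forall_hasDerivAt hJ)
      (fun x hx ↦ (hJ x (interior_subset hx)).hasDerivWithinAt)
      (fun x hx ↦ mul_nonneg (hQ₀ x (interior_subset hx)) (hR.pos x (interior_subset hx)).le)
      (left_mem_Icc.2 hab) hbI hab
  refine ⟨J b / R b, div_nonneg hJb (hR.pos b hbI).le, fun ε ↦
    ⟨fun x ↦ ((z ^ 2)⁻¹ * I x + ε * J x) / R x, by simp [hIa, hJa], ?_, fun x hx ↦ ?_⟩⟩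
  · rw [← mul_div_assoc]
    have := mul_nonpos_of_nonneg_of_nonpos (inv_pos.2 (pow_pos hz 2)).le hIb
    exact div_le_div_of_nonneg_right (by linarith) (hR.pos b hbI).le
  · refine ((((hI x hx).const_mul _).fun_add ((hJ x hx).const_mul ε)).fun_div
      (hR.hasDerivAt x hx) (hR.pos x hx).ne').congr_deriv ?_
    have := (hR.pos x hx).ne'
    rw [scaledSinPowDeriv, mul_div_cancel₀ _ hz.ne', Real.rpow_sub_one hz.ne',
      show 1 - p = -p + 1 by ring, Real.rpow_add_one hz.ne']
    field_simp
    ring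

theorem exists_div_le_add (hab : a ≤ b) (hz : 0 < z) (hQc : ContinuousOn Q (Icc a b))
    (hQ₀ : ∀ x ∈ Icc a b, 0 ≤ Q x) (hQ : AntitoneOn Q (Icc a b))
    (h : IsPrueferAngle p z (fun x ↦ z ^ (1 - p) * Q x) a b ψ) (hψa : ψ a = 0) :
    ∃ C ≥ 0, ∀ ε > 0, ∃ δ₀ > 0, ∀ δ ∈ Ioo 0 δ₀, ∀ χ : ℝ → ℝ, χ a = 0 →
      IsPrueferAngle p (z + δ) (fun x ↦ (z + δ) ^ (1 - p) * Q x) a b χ →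
      χ b / (z + δ) ≤ ψ b / z + δ * (ε * C) := by
  obtain ⟨C, hC, hlin⟩ := exists_linearization hab hz hQc hQ₀ hQ h hψa
  refine ⟨C, hC, fun ε hε ↦ ?_⟩
  obtain ⟨v, hva, hvb, hv⟩ := hlin ε
  obtain ⟨δ₀, hδ₀, hexp⟩ := exists_scaledSinPow_line_le (p := p) hz
    (h.continuousOn.div_const z) (continuousOn_of_forall_hasDerivAt hv) hε
  obtain ⟨M, hM⟩ := isCompact_Icc.exists_bound_of_continuousOn hQc
  refine ⟨δ₀, hδ₀, fun δ hδ χ hχa hχ ↦ ?_⟩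
  have hzδ : 0 < z + δ := add_pos hz hδ.1
  have hle := le_of_deriv_sub_le (K := M * ((z + δ) ^ (-p) * (p * (z + δ))))
    (fun x hx ↦ hχ.hasDerivAt_div hzδ hx)
    (fun x hx ↦ (h.hasDerivAt_div hz hx).fun_add ((hv x hx).const_mul δ))
    (by simp [hχa, hψa, hva]) (fun x hx hge ↦ ?_) b (right_mem_Icc.2 hab)
  · linarith [mul_le_mul_of_nonneg_left hvb hδ.1.le]
  · have hexpQ := mul_le_mul_of_nonneg_left (hexp δ hδ x hx) (hQ₀ x hx)
    have hLip := mul_le_mul_of_nonneg_left (scaledSinPow_sub_le (p := p) hzδ hge) (hQ₀ x hx)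
    have hLip₀ : 0 ≤ (z + δ) ^ (-p) * (p * (z + δ)) * (χ x / (z + δ) - (ψ x / z + δ * v x)) :=
      mul_nonneg (mul_nonneg (Real.rpow_nonneg hzδ.le _)
        (mul_nonneg (zero_lt_one.trans hp.out).le hzδ.le)) (sub_nonneg.2 hge)
    have hQM := mul_le_mul_of_nonneg_right (le_of_abs_le (hM x hx)) hLip₀
    linarith

theorem div_le_div_of_le {ψ : ℝ → ℝ → ℝ} {z₁ z₂ : ℝ} (hab : a ≤ b) (hz₁ : 0 < z₁) (hz : z₁ ≤ z₂)
    (hQc : ContinuousOn Q (Icc a b)) (hQ₀ : ∀ x ∈ Icc a b, 0 ≤ Q x) (hQ : AntitoneOn Q (Icc a b))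
    (hψa : ∀ z > 0, ψ z a = 0)
    (hψ : ∀ z > 0, IsPrueferAngle p z (fun x ↦ z ^ (1 - p) * Q x) a b (ψ z)) :
    ψ z₂ b / z₂ ≤ ψ z₁ b / z₁ := by
  have hcont : ContinuousOn (fun z ↦ ψ z b) (Ioi 0) := by
    refine continuousOn_apply_right hab continuousOn_id
      (k := fun z x ↦ z ^ (1 - p) * Q x) ?_ hψa hψ
    exact (continuousOn_fst.rpow_const fun y hy ↦ .inl (ne_of_gt hy.1)).mul
      (hQc.comp continuousOn_snd fun y hy ↦ hy.2)
  have hsub : Icc z₁ z₂ ⊆ Ioi 0 := fun z hz ↦ hz₁.trans_le hz.1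
  refine image_le_of_liminf_slope_right_le_deriv_boundary (f := fun z ↦ ψ z b / z)
    (B := fun _ ↦ ψ z₁ b / z₁) (B' := fun _ ↦ 0)
    ((hcont.mono hsub).div continuousOn_id fun z hz ↦ ne_of_gt (hsub hz)) le_rfl
    continuousOn_const (fun _ _ ↦ hasDerivWithinAt_const _ _ _) (fun z hz' r hr ↦ ?_) ⟨hz, le_rfl⟩
  have hz0 : 0 < z := hz₁.trans_le hz'.1
  obtain ⟨C, hC, hslope⟩ := exists_div_le_add hab hz0 hQc hQ₀ hQ (hψ z hz0) (hψa z hz0)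
  obtain ⟨δ, hδ, hle⟩ := hslope (r / (C + 1)) (by positivity)
  refine Eventually.frequently ?_
  filter_upwards [Ioo_mem_nhdsGT (lt_add_of_pos_right z hδ)] with w hw
  have hw0 : 0 < w := hz0.trans hw.1
  have hwz : 0 < w - z := sub_pos.2 hw.1
  have hdiv := hle (w - z) ⟨hwz, by linarith [hw.2]⟩ (ψ w) (hψa w hw0) (by simpa using hψ w hw0)
  have hrC : r / (C + 1) * C < r := by
    rw [div_mul_eq_mul_div, div_lt_iff₀ (by positivity)]
    linarith
  rw [add_sub_cancel] at hdiv
  rw [slope_def_field, div_lt_iff₀ hwz]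
  linarith [mul_lt_mul_of_pos_left hrC hwz]

end IsPrueferAngle

end Rescaled

/-- The half-linear system `u' = A v^{(q - 1)}`, `v' = -B u^{(p - 1)}` on `[a, b]`. For conjugate
exponents and `A = 1` it is the equation `-((u')^{(p - 1)})' = B u^{(p - 1)}`, with
`v = (u')^{(p - 1)}`. -/
structure IsHalfLinearPair (p q : ℝ) (A B : ℝ → ℝ) (a b : ℝ) (u v : ℝ → ℝ) : Prop where
  hasDerivAt_fst : ∀ x ∈ Icc a b, HasDerivAt u (A x * signedPow q (v x)) x
  hasDerivAt_snd : ∀ x ∈ Icc a b, HasDerivAt v (-(B x * signedPow p (u x))) x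

theorem mul_signedPow_swap {p q u₁ v₁ u₂ v₂ : ℝ} (hpq : p.HolderConjugate q)
    (h : u₁ * signedPow q v₂ = u₂ * signedPow q v₁) :
    v₁ * signedPow p u₂ = v₂ * signedPow p u₁ := by
  have := congrArg (signedPow p) h
  rw [signedPow_mul, signedPow_mul, signedPow_signedPow hpq.symm, signedPow_signedPow hpq.symm]
    at this
  linarith

theorem exists_abs_rpow_sub_le {p N : ℝ} (hp : 1 < p) :
    ∃ L, ∀ s t : ℝ, |s| ≤ N → |t| ≤ N → |(|s| ^ p - |t| ^ p)| ≤ L * |s - t| := by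
  obtain ⟨L, hL⟩ := isCompact_Icc.exists_bound_of_continuousOn
    (((continuous_signedPow hp).const_mul p).continuousOn (s := Icc (-N) N))
  refine ⟨L, fun s t hs ht ↦ ?_⟩
  exact (convex_Icc (-N) N).norm_image_sub_le_of_norm_hasDerivWithin_le
    (fun x _ ↦ (hasDerivAt_abs_rpow_signedPow hp x).hasDerivWithinAt) hL (abs_le.1 ht) (abs_le.1 hs)

theorem eqOn_of_riccati {p a b : ℝ} (hp : 1 < p) {A C m₁ m₂ : ℝ → ℝ}
    (hC : ContinuousOn C (Icc a b))
    (h₁ : ∀ x ∈ Icc a b, HasDerivAt m₁ (A x + C x * |m₁ x| ^ p) x)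
    (h₂ : ∀ x ∈ Icc a b, HasDerivAt m₂ (A x + C x * |m₂ x| ^ p) x) (ha : m₁ a = m₂ a) :
    EqOn m₁ m₂ (Icc a b) := by
  obtain ⟨M, hM⟩ := isCompact_Icc.exists_bound_of_continuousOn hC
  obtain ⟨N₁, hN₁⟩ := isCompact_Icc.exists_bound_of_continuousOn
    (continuousOn_of_forall_hasDerivAt h₁)
  obtain ⟨N₂, hN₂⟩ := isCompact_Icc.exists_bound_of_continuousOn
    (continuousOn_of_forall_hasDerivAt h₂)
  obtain ⟨L, hL⟩ := exists_abs_rpow_sub_le (p := p) (N := max N₁ N₂) hp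
  have hLip : ∀ x ∈ Icc a b, |C x * (|m₁ x| ^ p - |m₂ x| ^ p)| ≤ M * L * |m₁ x - m₂ x| :=
    fun x hx ↦ by
      rw [abs_mul, mul_assoc]
      exact mul_le_mul (hM x hx) (hL _ _ ((hN₁ x hx).trans (le_max_left _ _))
        ((hN₂ x hx).trans (le_max_right _ _))) (abs_nonneg _) ((norm_nonneg _).trans (hM x hx))
  refine fun x hx ↦ le_antisymm
    (le_of_deriv_sub_le (K := M * L) h₁ h₂ ha.le (fun x hx hle ↦ ?_) x hx)
    (le_of_deriv_sub_le (K := M * L) h₂ h₁ ha.ge (fun x hx hle ↦ ?_) x hx)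
  · have := (le_abs_self _).trans (hLip x hx)
    rw [abs_of_nonneg (sub_nonneg.2 hle)] at this
    linarith
  · have := (neg_le_abs _).trans (hLip x hx)
    rw [abs_sub_comm, abs_of_nonneg (sub_nonneg.2 hle)] at this
    linarith

namespace IsHalfLinearPair

variable {p q a b : ℝ} {A B u v u₁ v₁ u₂ v₂ : ℝ → ℝ}

theorem mono {a' b' : ℝ} (h : IsHalfLinearPair p q A B a b u v) (hsub : Icc a' b' ⊆ Icc a b) :
    IsHalfLinearPair p q A B a' b' u v :=
  ⟨fun x hx ↦ h.hasDerivAt_fst x (hsub hx), fun x hx ↦ h.hasDerivAt_snd x (hsub hx)⟩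

theorem swap (h : IsHalfLinearPair p q A B a b u v) : IsHalfLinearPair q p B A a b v (-u) :=
  ⟨fun x hx ↦ (h.hasDerivAt_snd x hx).congr_deriv (by simp),
    fun x hx ↦ (h.hasDerivAt_fst x hx).neg⟩

theorem continuousOn_fst (h : IsHalfLinearPair p q A B a b u v) : ContinuousOn u (Icc a b) :=
  continuousOn_of_forall_hasDerivAt h.hasDerivAt_fst

theorem continuousOn_snd (h : IsHalfLinearPair p q A B a b u v) : ContinuousOn v (Icc a b) :=
  continuousOn_of_forall_hasDerivAt h.hasDerivAt_snd

theorem energy_pos (hpq : p.HolderConjugate q) (hA : ContinuousOn A (Icc a b))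
    (hB : ContinuousOn B (Icc a b)) (h : IsHalfLinearPair p q A B a b u v)
    (hne : ∃ x ∈ Icc a b, u x ≠ 0 ∨ v x ≠ 0) : ∀ x ∈ Icc a b, 0 < |u x| ^ p + |v x| ^ q := by
  obtain ⟨N, hN⟩ := isCompact_Icc.exists_bound_of_continuousOn hA
  obtain ⟨M, hM⟩ := isCompact_Icc.exists_bound_of_continuousOn hB
  obtain ⟨x₁, hx₁, hne⟩ := hne
  have hp := hpq.pos
  have hq := hpq.symm.pos
  refine pos_of_abs_deriv_le (K := p * N + q * M)
    (fun x hx ↦ ((hasDerivAt_abs_rpow_signedPow hpq.lt _).comp x (h.hasDerivAt_fst x hx)).fun_add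
      ((hasDerivAt_abs_rpow_signedPow hpq.symm.lt _).comp x (h.hasDerivAt_snd x hx)))
    (fun x hx ↦ ?_) hx₁ ?_
  · have hcoeff : |p * A x - q * B x| ≤ p * N + q * M := by
      refine (abs_sub _ _).trans ?_
      rw [abs_mul, abs_mul, abs_of_pos hp, abs_of_pos hq]
      exact add_le_add (mul_le_mul_of_nonneg_left (hN x hx) hp.le)
        (mul_le_mul_of_nonneg_left (hM x hx) hq.le)
    have hYoung : |signedPow p (u x) * signedPow q (v x)| ≤ |u x| ^ p + |v x| ^ q := by
      have := Real.young_inequality_of_nonneg (abs_nonneg (signedPow p (u x)))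
        (abs_nonneg (signedPow q (v x))) hpq.symm
      rw [abs_signedPow_rpow hpq, abs_signedPow_rpow hpq.symm, ← abs_mul] at this
      exact this.trans (add_le_add (div_le_self (by positivity) hpq.symm.lt.le)
        (div_le_self (by positivity) hpq.lt.le))
    calc |p * signedPow p (u x) * (A x * signedPow q (v x)) +
          q * signedPow q (v x) * -(B x * signedPow p (u x))|
        = |p * A x - q * B x| * |signedPow p (u x) * signedPow q (v x)| := by
          rw [← abs_mul]
          ring_nf
      _ ≤ _ := mul_le_mul hcoeff hYoung (abs_nonneg _) ((abs_nonneg _).trans hcoeff)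
  · rcases hne with hu | hv
    · have := Real.rpow_pos_of_pos (abs_pos.2 hu) p
      positivity
    · have := Real.rpow_pos_of_pos (abs_pos.2 hv) q
      positivity

theorem hasDerivAt_riccati (hpq : p.HolderConjugate q) (h : IsHalfLinearPair p q A B a b u v)
    {x : ℝ} (hx : x ∈ Icc a b) (hvx : v x ≠ 0) :
    HasDerivAt (fun x ↦ u x / signedPow q (v x))
      (A x + (q - 1) * B x * |u x / signedPow q (v x)| ^ p) x := by
  have hq : signedPow q (v x) ≠ 0 := (signedPow_eq_zero hpq.symm).not.2 hvx
  refine ((h.hasDerivAt_fst x hx).fun_div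
    ((hasDerivAt_signedPow hvx).comp x (h.hasDerivAt_snd x hx)) hq).congr_deriv ?_
  have hv : |v x| ^ (q - 2) ≠ 0 := (Real.rpow_pos_of_pos (abs_pos.2 hvx) _).ne'
  rw [abs_div, Real.div_rpow (abs_nonneg _) (abs_nonneg _), abs_signedPow_rpow hpq.symm,
    ← signedPow_mul_self hpq.lt (u x), ← signedPow_mul_self hpq.symm.lt (v x)]
  simp only [Function.comp_apply, signedPow.eq_1 q]
  field_simp
  ring

theorem eqOn_of_snd_ne_zero (hpq : p.HolderConjugate q) (hB : ContinuousOn B (Icc a b))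
    (h₁ : IsHalfLinearPair p q A B a b u₁ v₁) (h₂ : IsHalfLinearPair p q A B a b u₂ v₂)
    (hv₁ : ∀ x ∈ Icc a b, v₁ x ≠ 0) (hv₂ : ∀ x ∈ Icc a b, v₂ x ≠ 0) (hab : a ≤ b)
    (ha : u₁ a * signedPow q (v₂ a) = u₂ a * signedPow q (v₁ a)) :
    EqOn (fun x ↦ u₁ x * signedPow q (v₂ x)) (fun x ↦ u₂ x * signedPow q (v₁ x)) (Icc a b) := by
  have hne {v : ℝ → ℝ} (hv : ∀ x ∈ Icc a b, v x ≠ 0) : ∀ x ∈ Icc a b, signedPow q (v x) ≠ 0 :=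
    fun x hx ↦ (signedPow_eq_zero hpq.symm).not.2 (hv x hx)
  have haI := left_mem_Icc.2 hab
  have hm := eqOn_of_riccati hpq.lt (continuousOn_const.mul hB)
    (fun x hx ↦ h₁.hasDerivAt_riccati hpq hx (hv₁ x hx))
    (fun x hx ↦ h₂.hasDerivAt_riccati hpq hx (hv₂ x hx))
    ((div_eq_div_iff (hne hv₁ a haI) (hne hv₂ a haI)).2 ha)
  exact fun x hx ↦ (div_eq_div_iff (hne hv₁ x hx) (hne hv₂ x hx)).1 (hm hx)

theorem eventually_eq_of_snd_ne_zero (hpq : p.HolderConjugate q) (hB : ContinuousOn B (Icc a b))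
    (h₁ : IsHalfLinearPair p q A B a b u₁ v₁) (h₂ : IsHalfLinearPair p q A B a b u₂ v₂)
    {y : ℝ} (hy : y ∈ Ico a b) (hpos : 0 < |u₂ y| ^ p + |v₂ y| ^ q) (hv₁ : v₁ y ≠ 0)
    (heq : u₁ y * signedPow q (v₂ y) = u₂ y * signedPow q (v₁ y)) :
    ∀ᶠ x in 𝓝[>] y, u₁ x * signedPow q (v₂ x) = u₂ x * signedPow q (v₁ x) := by
  have hyI := Ico_subset_Icc_self hy
  have hv₂ : v₂ y ≠ 0 := fun hv₂ ↦ by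
    have hu₂ : u₂ y = 0 := by
      simpa [hv₂, (signedPow_eq_zero hpq.symm).not.2 hv₁] using heq.symm
    simp [hu₂, hv₂, hpq.ne_zero, hpq.symm.ne_zero] at hpos
  have hne : ∀ᶠ x in 𝓝[≥] y, v₁ x ≠ 0 ∧ v₂ x ≠ 0 := nhdsWithin_le_nhds
    (((h₁.hasDerivAt_snd y hyI).continuousAt.eventually_ne hv₁).and
      ((h₂.hasDerivAt_snd y hyI).continuousAt.eventually_ne hv₂))
  obtain ⟨c, hyc, hc⟩ := mem_nhdsGE_iff_exists_Icc_subset.1 (hne.and (Icc_mem_nhdsGE hy.2))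
  have hsub : Icc y c ⊆ Icc a b := fun x hx ↦ ⟨hy.1.trans hx.1, (hc hx).2.2⟩
  filter_upwards [Icc_mem_nhdsGT hyc] with x hx
  exact eqOn_of_snd_ne_zero hpq (hB.mono hsub) (h₁.mono hsub) (h₂.mono hsub)
    (fun x hx ↦ (hc hx).1.1) (fun x hx ↦ (hc hx).1.2) hyc.le heq hx

/- The quotient `u / v^{(q - 1)}` solves a Riccati equation, which is locally Lipschitz although the
system itself need not be; near a zero of `v` the roles of `u` and `v` are exchanged. -/
theorem eqOn (hpq : p.HolderConjugate q) (hA : ContinuousOn A (Icc a b))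
    (hB : ContinuousOn B (Icc a b)) (h₁ : IsHalfLinearPair p q A B a b u₁ v₁)
    (h₂ : IsHalfLinearPair p q A B a b u₂ v₂)
    (hpos₁ : ∀ x ∈ Icc a b, 0 < |u₁ x| ^ p + |v₁ x| ^ q)
    (hpos₂ : ∀ x ∈ Icc a b, 0 < |u₂ x| ^ p + |v₂ x| ^ q)
    (ha : u₁ a * signedPow q (v₂ a) = u₂ a * signedPow q (v₁ a)) :
    EqOn (fun x ↦ u₁ x * signedPow q (v₂ x)) (fun x ↦ u₂ x * signedPow q (v₁ x)) (Icc a b) := by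
  have hq := continuous_signedPow hpq.symm.lt
  have hclosed : IsClosed ({x | u₁ x * signedPow q (v₂ x) = u₂ x * signedPow q (v₁ x)} ∩
      Icc a b) := by
    rw [inter_comm]
    exact isClosed_Icc.isClosed_eq
      (h₁.continuousOn_fst.mul (hq.comp_continuousOn h₂.continuousOn_snd))
      (h₂.continuousOn_fst.mul (hq.comp_continuousOn h₁.continuousOn_snd))
  refine hclosed.Icc_subset_of_forall_mem_nhdsWithin ha fun y ⟨heq, hy⟩ ↦ ?_
  have hyI := Ico_subset_Icc_self hy
  by_cases hv₁ : v₁ y = 0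
  · have hu₁ : (-u₁) y ≠ 0 := fun hu₁ ↦ by
      have := hpos₁ y hyI
      simp [neg_eq_zero.1 hu₁, hv₁, hpq.ne_zero, hpq.symm.ne_zero] at this
    filter_upwards [eventually_eq_of_snd_ne_zero hpq.symm hA h₁.swap h₂.swap hy
      (by simpa [add_comm] using hpos₂ y hyI) hu₁
      (by simpa using mul_signedPow_swap hpq heq)] with x hx
    simpa using mul_signedPow_swap hpq.symm hx
  · exact eventually_eq_of_snd_ne_zero hpq hB h₁ h₂ hy (hpos₂ y hyI) hv₁ heq

end IsHalfLinearPair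

section Eigenvalue

variable {p z lam a b : ℝ} [hp : Fact (1 < p)] {q c k θ R : ℝ → ℝ}

theorem IsPrueferAmplitude.hasDerivAt_rpow_inv (h : IsPrueferAmplitude p k a b θ R) {x : ℝ}
    (hx : x ∈ Icc a b) :
    HasDerivAt (fun x ↦ R x ^ p⁻¹)
      (-(k x * (signedPow p (genSin p (θ x)) * genCos p (θ x)) * R x ^ p⁻¹)) x := by
  have hp₀ := (holderConjugate_conjExponent p).ne_zero
  have hRx := h.pos x hx
  refine ((h.hasDerivAt x hx).rpow_const (p := p⁻¹) (.inl hRx.ne')).congr_deriv ?_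
  rw [Real.rpow_sub_one hRx.ne', sinPowDeriv]
  field_simp

theorem IsPrueferAmplitude.isHalfLinearPair (hz : 0 < z)
    (hR : IsPrueferAmplitude p (fun x ↦ z ^ (1 - p) * c x - z) a b θ R)
    (hθ : IsPrueferAngle p z (fun x ↦ z ^ (1 - p) * c x - z) a b θ) :
    IsHalfLinearPair p p.conjExponent 1 (fun x ↦ (p - 1) * c x) a b
      (fun x ↦ R x ^ p⁻¹ * genSin p (θ x) / z)
      (fun x ↦ signedPow p (R x ^ p⁻¹ * genCos p (θ x))) := by
  refine ⟨fun x hx ↦ ?_, fun x hx ↦ ?_⟩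
  · refine (((hR.hasDerivAt_rpow_inv hx).fun_mul
      ((hasDerivAt_genSin p _).comp x (hθ x hx))).div_const z).congr_deriv ?_
    rw [signedPow_signedPow (holderConjugate_conjExponent p), sinPow, ← signedPow_mul_self hp.out]
    simp only [Function.comp_apply, Pi.one_apply]
    field_simp
    ring
  · have hρ : R x ^ p⁻¹ ≠ 0 := (Real.rpow_pos_of_pos (hR.pos x hx) _).ne'
    have hpyth := sinPow_add_abs_genCos_rpow p (θ x)
    rw [← signedPow_mul_self hp.out] at hpyth
    have hscale : signedPow p z⁻¹ = z ^ (1 - p) := by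
      rw [signedPow_of_nonneg hp.out (inv_nonneg.2 hz.le), Real.inv_rpow hz.le,
        ← Real.rpow_neg hz.le, neg_sub]
    simp only [signedPow_mul, div_eq_mul_inv, hscale]
    refine (((hasDerivAt_signedPow hρ).comp x (hR.hasDerivAt_rpow_inv hx)).fun_mul
      ((hasDerivAt_signedPow_genCos p _).comp x (hθ x hx))).congr_deriv ?_
    simp only [Function.comp_apply, signedPow.eq_1 p (R x ^ p⁻¹)]
    linear_combination (-(p - 1) * (z ^ (1 - p) * c x - z) * |R x ^ p⁻¹| ^ (p - 2) * R x ^ p⁻¹ *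
      signedPow p (genSin p (θ x))) * hpyth

theorem isDirichletEigenvalue_iff_exists_isHalfLinearPair :
    IsDirichletEigenvalue p q a b lam ↔ ∃ u w : ℝ → ℝ,
      IsHalfLinearPair p p.conjExponent 1 (fun x ↦ (p - 1) * (lam - q x)) a b u
        (fun x ↦ signedPow p (w x)) ∧ u a = 0 ∧ u b = 0 ∧ ∃ x ∈ Icc a b, u x ≠ 0 := by
  have hpq := holderConjugate_conjExponent p
  refine ⟨fun ⟨y, yd, hne, hy, hyd, hya, hyb⟩ ↦
    ⟨y, yd, ⟨fun x hx ↦ ?_, fun x hx ↦ ?_⟩, hya, hyb, hne⟩,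
    fun ⟨u, w, h, hua, hub, hne⟩ ↦ ⟨u, w, hne, fun x hx ↦ ?_, fun x hx ↦ ?_, hua, hub⟩⟩
  · simpa [signedPow_signedPow hpq] using hy x hx
  · exact HasDerivAt.congr_deriv (hyd x hx) (by rw [signedPow]; ring)
  · simpa [signedPow_signedPow hpq] using h.hasDerivAt_fst x hx
  · exact HasDerivAt.congr_deriv (h.hasDerivAt_snd x hx) (by rw [signedPow]; ring)

theorem isDirichletEigenvalue_iff (hab : a < b) (hz : 0 < z) (hq : ContinuousOn q (Icc a b))
    (hθa : θ a = 0)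
    (hθ : IsPrueferAngle p z (fun x ↦ z ^ (1 - p) * (lam - q x) - z) a b θ) :
    IsDirichletEigenvalue p q a b lam ↔ ∃ j : ℤ, θ b = j * genPi p := by
  have hpq := holderConjugate_conjExponent p
  have hk : ContinuousOn (fun x ↦ z ^ (1 - p) * (lam - q x) - z) (Icc a b) := by fun_prop
  have hA : ContinuousOn (1 : ℝ → ℝ) (Icc a b) := continuousOn_const
  have hB : ContinuousOn (fun x ↦ (p - 1) * (lam - q x)) (Icc a b) := by fun_prop
  have hbI := right_mem_Icc.2 hab.le
  obtain ⟨R, hR⟩ := IsPrueferAmplitude.exists_of_continuousOn (p := p) hab.le hk hθ.continuousOn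
  have hpair := hR.isHalfLinearPair hz hθ
  have hsina : genSin p (θ a) = 0 := by rw [hθa, genSin_zero]
  have hρ : ∀ x ∈ Icc a b, R x ^ p⁻¹ ≠ 0 := fun x hx ↦ (Real.rpow_pos_of_pos (hR.pos x hx) _).ne'
  have hne : ∃ x ∈ Icc a b, R x ^ p⁻¹ * genSin p (θ x) / z ≠ 0 := by
    obtain ⟨x, hx, hsin⟩ := hθ.exists_sinPow_pos hk hz hθa hab
    refine ⟨x, hx, div_ne_zero (mul_ne_zero (hρ x hx) fun hzero ↦ hsin.ne' ?_) hz.ne'⟩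
    rw [sinPow, hzero, abs_zero, Real.zero_rpow hpq.ne_zero]
  rw [isDirichletEigenvalue_iff_exists_isHalfLinearPair]
  refine ⟨fun ⟨u, w, huv, hua, hub, x, hx, hux⟩ ↦ ?_,
    fun ⟨j, hj⟩ ↦ ⟨_, _, hpair, by simp [hsina], ?_, hne⟩⟩
  · have hpos := huv.energy_pos hpq hA hB ⟨x, hx, .inl hux⟩
    have heq := huv.eqOn hpq hA hB hpair hpos
      (hpair.energy_pos hpq hA hB (hne.imp fun _ h ↦ ⟨h.1, .inl h.2⟩)) (by simp [hua, hsina]) hbI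
    have hwb : signedPow p (w b) ≠ 0 := fun hwb ↦ by
      simpa [hub, hwb, hpq.ne_zero, hpq.symm.ne_zero] using hpos b hbI
    have hsin : genSin p (θ b) = 0 := by
      simpa [hub, (signedPow_eq_zero hpq.symm).not.2 hwb, hρ b hbI, hz.ne'] using heq.symm
    exact exists_int_of_genSin_eq_zero hsin
  · have hsin := sinPow_int_mul_genPi p j
    rw [sinPow, Real.rpow_eq_zero (abs_nonneg _) hpq.ne_zero, abs_eq_zero] at hsin
    simp [hj, hsin]

end Eigenvalue

theorem eq_natCast_of_strictMono_of_int_iff {F : ℝ → ℝ} (hF : StrictMono F) (hFcont : Continuous F)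
    (hFpos : ∀ x, 0 < F x) {x₀ : ℝ} (hx₀ : F x₀ ≤ 1) {Λ : ℕ → ℝ}
    (hΛ : StrictMonoOn Λ {n | 1 ≤ n}) (hint : ∀ n, 1 ≤ n → ∃ j : ℤ, F (Λ n) = j)
    (hall : ∀ x, (∃ j : ℤ, F x = j) → ∃ n, 1 ≤ n ∧ x = Λ n) {n : ℕ} (hn : 1 ≤ n) :
    F (Λ n) = n := by
  have hnat : ∀ n, ∃ κ : ℕ, F (Λ (n + 1)) = κ + 1 := fun n ↦ by
    obtain ⟨j, hj⟩ := hint (n + 1) (by simp)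
    have hj₀ : 0 < j := by exact_mod_cast hj ▸ hFpos (Λ (n + 1))
    obtain ⟨κ, rfl⟩ := Int.eq_succ_of_zero_lt hj₀
    exact ⟨κ, by simpa using hj⟩
  choose κ hκ using hnat
  have hκmono : StrictMono κ := fun i j hij ↦ by
    have := hF (hΛ (a := i + 1) (b := j + 1) (by simp) (by simp) (by simpa using hij))
    rw [hκ, hκ] at this
    exact_mod_cast lt_of_add_lt_add_right this
  have hκsurj : Function.Surjective κ := fun m ↦ by
    have hm : (m : ℝ) ≤ κ m := by exact_mod_cast hκmono.le_apply
    have hx₀m : F x₀ ≤ m + 1 := by linarith [m.cast_nonneg (α := ℝ)]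
    have hmΛ : (m : ℝ) + 1 ≤ F (Λ (m + 1)) := by rw [hκ]; gcongr
    obtain ⟨x, hx⟩ := mem_range_of_exists_le_of_exists_ge hFcont ⟨x₀, hx₀m⟩ ⟨Λ (m + 1), hmΛ⟩
    obtain ⟨i, hi, rfl⟩ := hall x ⟨m + 1, by simpa using hx⟩
    obtain ⟨i, rfl⟩ := Nat.exists_eq_add_of_le' hi
    exact ⟨i, by simpa [hκ] using hx⟩
  have hκid : κ = id := (hκmono.range_inj strictMono_id).1 (by simp [hκsurj.range_eq])
  obtain ⟨n, rfl⟩ := Nat.exists_eq_add_of_le' hn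
  simp [hκ, hκid]

section Spectrum

variable {p z lam a b : ℝ} [hp : Fact (1 < p)] {q : ℝ → ℝ}

theorem IsDirichletEigenvalue.exists_lt (h : IsDirichletEigenvalue p q a b lam) (hab : a < b)
    (hq : ContinuousOn q (Icc a b)) : ∃ x ∈ Icc a b, q x < lam := by
  by_contra! hle
  have hk : ContinuousOn (fun x ↦ 1 ^ (1 - p) * (lam - q x) - 1) (Icc a b) := by fun_prop
  obtain ⟨θ, hθa, hθ⟩ := IsPrueferAngle.exists_of_continuousOn (p := p) hab.le 1 hk
  have hhalf := hθ.le_genPi_div_two hk (fun x hx ↦ by rw [Real.one_rpow]; linarith [hle x hx]) hθa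
    b (right_mem_Icc.2 hab.le)
  have hpos := hθ.pos hk one_pos hθa hab
  obtain ⟨j, hj⟩ := (isDirichletEigenvalue_iff hab one_pos hq hθa hθ).1 h
  have hπ := genPi_pos p
  rw [hj] at hhalf hpos
  have hj₀ : 0 < j := Int.cast_pos.1 (pos_of_mul_pos_left hpos hπ.le)
  have hj₁ : (1 : ℝ) ≤ j := by exact_mod_cast hj₀
  nlinarith

/- The final angle is a multiple of `genPi p` for every frequency, so it cannot change along a path
of frequencies. -/
theorem IsDirichletEigenvalue.angle_eq (h : IsDirichletEigenvalue p q a b lam) (hab : a < b)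
    (hq : ContinuousOn q (Icc a b)) {z₁ z₂ : ℝ} (hz₁ : 0 < z₁) (hz₂ : 0 < z₂) {θ₁ θ₂ : ℝ → ℝ}
    (hθ₁a : θ₁ a = 0) (hθ₂a : θ₂ a = 0)
    (hθ₁ : IsPrueferAngle p z₁ (fun x ↦ z₁ ^ (1 - p) * (lam - q x) - z₁) a b θ₁)
    (hθ₂ : IsPrueferAngle p z₂ (fun x ↦ z₂ ^ (1 - p) * (lam - q x) - z₂) a b θ₂) :
    θ₁ b = θ₂ b := by
  have hk (z : ℝ) : ContinuousOn (fun x ↦ z ^ (1 - p) * (lam - q x) - z) (Icc a b) := by fun_prop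
  choose ψ hψa hψ using fun z ↦ IsPrueferAngle.exists_of_continuousOn (p := p) hab.le z (hk z)
  have hcont : ContinuousOn (fun z ↦ ψ z b) (Ioi 0) := by
    refine IsPrueferAngle.continuousOn_apply_right (z := id)
      (k := fun z x ↦ z ^ (1 - p) * (lam - q x) - z) hab.le continuousOn_id (.sub (.mul ?_ ?_) ?_)
      (fun z _ ↦ hψa z) fun z _ ↦ hψ z
    · exact continuousOn_fst.rpow_const fun x hx ↦ .inl hx.1.ne'
    · exact continuousOn_const.sub (hq.comp continuousOn_snd fun x hx ↦ hx.2)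
    · exact continuousOn_fst
  have hdisc : IsDiscrete (range ((↑) : ℤ → ℝ)) :=
    ⟨Int.isClosedEmbedding_coe_real.isEmbedding.toHomeomorph.symm.isEmbedding.discreteTopology⟩
  have hπ := (genPi_pos p).ne'
  have hconst := isPreconnected_Ioi.constant_of_mapsTo hdisc (hcont.div_const (genPi p))
    (fun z hz ↦ by
      obtain ⟨j, hj⟩ := (isDirichletEigenvalue_iff hab hz hq (hψa z) (hψ z)).1 h
      exact ⟨j, by simp [hj, hπ]⟩) hz₁ hz₂
  have hψ_eq {z : ℝ} {θ : ℝ → ℝ} (hθa : θ a = 0)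
      (hθ : IsPrueferAngle p z (fun x ↦ z ^ (1 - p) * (lam - q x) - z) a b θ) : θ b = ψ z b :=
    hθ.eqOn (hψ z) (hk z) (hθa.trans (hψa z).symm) (right_mem_Icc.2 hab.le)
  rw [hψ_eq hθ₁a hθ₁, hψ_eq hθ₂a hθ₂]
  exact (div_left_inj' hπ).1 hconst

/-- `Λ 1 < Λ 2 < ⋯` are the Dirichlet eigenvalues of the potential `q` on `[a, b]`; the value `Λ 0`
is irrelevant. -/
structure IsDirichletSpectrum (p : ℝ) (q : ℝ → ℝ) (a b : ℝ) (Λ : ℕ → ℝ) : Prop where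
  strictMonoOn : StrictMonoOn Λ {n | 1 ≤ n}
  isDirichletEigenvalue : ∀ n, 1 ≤ n → IsDirichletEigenvalue p q a b (Λ n)
  exists_eq : ∀ μ, IsDirichletEigenvalue p q a b μ → ∃ n, 1 ≤ n ∧ μ = Λ n

namespace IsDirichletSpectrum

variable {Λ : ℕ → ℝ} {θ : ℝ → ℝ} {n : ℕ}

theorem angle_eq_of_frequency_one (h : IsDirichletSpectrum p q a b Λ) (hab : a < b)
    (hq : ContinuousOn q (Icc a b)) (hn : 1 ≤ n) {θ : ℝ → ℝ → ℝ} (hθa : ∀ lam, θ lam a = 0)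
    (hθ : ∀ lam, IsPrueferAngle p 1 (fun x ↦ 1 ^ (1 - p) * (lam - q x) - 1) a b (θ lam)) :
    θ (Λ n) b = n * genPi p := by
  have hπ := genPi_pos p
  have hk (lam : ℝ) : ContinuousOn (fun x ↦ 1 ^ (1 - p) * (lam - q x) - 1) (Icc a b) := by fun_prop
  have hiff (lam : ℝ) : IsDirichletEigenvalue p q a b lam ↔ ∃ j : ℤ, θ lam b / genPi p = j := by
    simp_rw [isDirichletEigenvalue_iff hab one_pos hq (hθa lam) (hθ lam), div_eq_iff hπ.ne']
  have hmono : StrictMono fun lam ↦ θ lam b / genPi p := fun l₁ l₂ hl ↦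
    div_lt_div_of_pos_right ((hθ l₁).lt (hθ l₂) (hk l₁) (hk l₂) one_pos
      (fun x _ ↦ by rw [Real.one_rpow]; linarith) (hθa l₁) (hθa l₂) hab) hπ
  have hcont : Continuous fun lam ↦ θ lam b / genPi p := by
    refine (continuousOn_univ.1 (IsPrueferAngle.continuousOn_apply_right hab.le
      continuousOn_const ?_ (fun lam _ ↦ hθa lam) fun lam _ ↦ hθ lam)).div_const _
    exact (continuousOn_const.mul (continuousOn_fst.sub
      (hq.comp continuousOn_snd fun x hx ↦ hx.2))).sub continuousOn_const
  obtain ⟨M, hM⟩ := isCompact_Icc.exists_bound_of_continuousOn hq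
  have hlow : θ (-M) b / genPi p ≤ 1 := by
    rw [div_le_one hπ]
    refine ((hθ (-M)).le_genPi_div_two (hk _) (fun x hx ↦ ?_) (hθa _) b
      (right_mem_Icc.2 hab.le)).trans (half_le_self hπ.le)
    rw [Real.one_rpow]
    linarith [neg_le_of_abs_le (hM x hx)]
  rw [← div_eq_iff hπ.ne']
  exact eq_natCast_of_strictMono_of_int_iff hmono hcont
    (fun lam ↦ div_pos ((hθ lam).pos (hk lam) one_pos (hθa lam) hab) hπ) hlow h.strictMonoOn
    (fun n hn ↦ (hiff _).1 (h.isDirichletEigenvalue n hn))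
    (fun lam hlam ↦ h.exists_eq lam ((hiff lam).2 hlam)) hn

theorem angle_eq (h : IsDirichletSpectrum p q a b Λ) (hab : a < b)
    (hq : ContinuousOn q (Icc a b)) (hn : 1 ≤ n) (hz : 0 < z) (hθa : θ a = 0)
    (hθ : IsPrueferAngle p z (fun x ↦ z ^ (1 - p) * (Λ n - q x) - z) a b θ) :
    θ b = n * genPi p := by
  choose ψ hψa hψ using fun lam ↦ IsPrueferAngle.exists_of_continuousOn (p := p) hab.le 1
    (k := fun x ↦ 1 ^ (1 - p) * (lam - q x) - 1) (by fun_prop)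
  rw [← h.angle_eq_of_frequency_one hab hq hn hψa hψ]
  exact (h.isDirichletEigenvalue n hn).angle_eq hab hq hz one_pos hθa (hψa _) hθ (hψ _)

/- At the frequency `Λ n ^ p⁻¹` the eigenvalue disappears from the angle equation. -/
theorem angle_rpow_inv_eq (h : IsDirichletSpectrum p q a b Λ) (hab : a < b)
    (hq : ContinuousOn q (Icc a b)) (hn : 1 ≤ n) (hΛ : 0 < Λ n) (hθa : θ a = 0)
    (hθ : IsPrueferAngle p (Λ n ^ p⁻¹) (fun x ↦ (Λ n ^ p⁻¹) ^ (1 - p) * -q x) a b θ) :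
    θ b = n * genPi p := by
  have hz : 0 < Λ n ^ p⁻¹ := Real.rpow_pos_of_pos hΛ _
  have hΛz : (Λ n ^ p⁻¹) ^ (1 - p) * Λ n = Λ n ^ p⁻¹ := by
    nth_rw 2 [← Real.rpow_inv_rpow hΛ.le (holderConjugate_conjExponent p).ne_zero]
    rw [← Real.rpow_add hz, sub_add_cancel, Real.rpow_one]
  exact h.angle_eq hab hq hn hz hθa (hθ.congr fun x _ ↦ by linear_combination -hΛz)

end IsDirichletSpectrum

end Spectrum

theorem add_sub_mem_Icc {a b x : ℝ} (hx : x ∈ Icc a b) : a + b - x ∈ Icc a b :=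
  ⟨by linarith [hx.2], by linarith [hx.1]⟩

namespace IsPrueferAngle

variable {p : ℝ} [hp : Fact (1 < p)] {z z₁ z₂ a b x₀ : ℝ} {k Q θ φ θ₁ θ₂ : ℝ → ℝ}

theorem reflect (h : IsPrueferAngle p z k a b θ) (j : ℤ) :
    IsPrueferAngle p z (fun x ↦ k (a + b - x)) a b (fun x ↦ j * genPi p - θ (a + b - x)) :=
  fun x hx ↦ by
    refine (((h _ (add_sub_mem_Icc hx)).comp x ((hasDerivAt_id x).const_sub (a + b))).const_sub
      (j * genPi p)).congr_deriv ?_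
    rw [← sinPow_neg p (_ - _), neg_sub, (sinPow_periodic p).sub_int_mul_eq]
    ring

theorem add_reflect_eq (hθ : IsPrueferAngle p z k a b θ)
    (hφ : IsPrueferAngle p z (fun x ↦ k (a + b - x)) a b φ) (hk : ContinuousOn k (Icc a b))
    (hφa : φ a = 0) {j : ℤ} (hθb : θ b = j * genPi p) {x : ℝ} (hx : x ∈ Icc a b) :
    θ x + φ (a + b - x) = j * genPi p := by
  have := (hθ.reflect j).eqOn hφ
    (hk.comp (by fun_prop) fun x hx ↦ add_sub_mem_Icc hx)
    (by simp [hθb, hφa]) (add_sub_mem_Icc hx)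
  simp only [sub_sub_cancel] at this
  linarith

/- The angle is measured from both ends up to `x₀`: seen from either end, `Q` is decreasing up to
`x₀`. -/
theorem div_le_div_of_single_well (hz₁ : 0 < z₁) (hz : z₁ ≤ z₂) (hQc : ContinuousOn Q (Icc a b))
    (hQ₀ : ∀ x ∈ Icc a b, 0 ≤ Q x) (hx₀ : x₀ ∈ Icc a b) (hanti : AntitoneOn Q (Icc a x₀))
    (hmono : MonotoneOn Q (Icc x₀ b)) (hθ₁a : θ₁ a = 0) (hθ₂a : θ₂ a = 0)
    (hθ₁ : IsPrueferAngle p z₁ (fun x ↦ z₁ ^ (1 - p) * Q x) a b θ₁)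
    (hθ₂ : IsPrueferAngle p z₂ (fun x ↦ z₂ ^ (1 - p) * Q x) a b θ₂) {j₁ j₂ : ℤ}
    (hθ₁b : θ₁ b = j₁ * genPi p) (hθ₂b : θ₂ b = j₂ * genPi p) : θ₂ b / z₂ ≤ θ₁ b / z₁ := by
  have hab : a ≤ b := hx₀.1.trans hx₀.2
  have hk (z : ℝ) : ContinuousOn (fun x ↦ z ^ (1 - p) * Q x) (Icc a b) := by fun_prop
  have hQ'c : ContinuousOn (fun x ↦ Q (a + b - x)) (Icc a b) :=
    hQc.comp (by fun_prop) fun x hx ↦ add_sub_mem_Icc hx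
  choose L hLa hL using fun z ↦ exists_of_continuousOn (p := p) hab z (hk z)
  choose R hRa hR using fun z ↦ exists_of_continuousOn (p := p) hab z
    (continuousOn_const.mul hQ'c : ContinuousOn (fun x ↦ z ^ (1 - p) * Q (a + b - x)) (Icc a b))
  have hsum {z : ℝ} {θ : ℝ → ℝ} {j : ℤ} (hθa : θ a = 0) (hθb : θ b = j * genPi p)
      (hθ : IsPrueferAngle p z (fun x ↦ z ^ (1 - p) * Q x) a b θ) :
      θ b = L z x₀ + R z (a + b - x₀) := by
    rw [← hθ.eqOn (hL z) (hk z) (hθa.trans (hLa z).symm) hx₀, hθb]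
    exact (hθ.add_reflect_eq (hR z) (hk z) (hRa z) hθb hx₀).symm
  have hl : Icc a x₀ ⊆ Icc a b := Icc_subset_Icc_right hx₀.2
  have hr : Icc a (a + b - x₀) ⊆ Icc a b := Icc_subset_Icc_right (add_sub_mem_Icc hx₀).2
  have hleft := div_le_div_of_le hx₀.1 hz₁ hz (hQc.mono hl) (fun x hx ↦ hQ₀ x (hl hx)) hanti
    (fun z _ ↦ hLa z) fun z _ ↦ (hL z).mono hl
  have hright := div_le_div_of_le (add_sub_mem_Icc hx₀).1 hz₁ hz (hQ'c.mono hr)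
    (fun x hx ↦ hQ₀ _ (add_sub_mem_Icc (hr hx)))
    (fun x hx y hy hxy ↦ hmono ⟨by linarith [hy.2], by linarith [hy.1]⟩
      ⟨by linarith [hx.2], by linarith [hx.1]⟩ (by linarith))
    (fun z _ ↦ hRa z) fun z _ ↦ (hR z).mono hr
  rw [hsum hθ₁a hθ₁b hθ₁, hsum hθ₂a hθ₂b hθ₂, add_div, add_div]
  exact add_le_add hleft hright

end IsPrueferAngle

theorem rpow_div_rpow_le_div_of_div_rpow_inv_le {p s t x y : ℝ} (hp : 0 < p) (hs : 0 < s)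
    (ht : 0 ≤ t) (hx : 0 < x) (hy : 0 < y) (h : t / y ^ p⁻¹ ≤ s / x ^ p⁻¹) :
    t ^ p / s ^ p ≤ y / x := by
  have h' : t / s ≤ (y / x) ^ p⁻¹ := by
    rw [Real.div_rpow hy.le hx.le, div_le_div_iff₀ hs (Real.rpow_pos_of_pos hx _), mul_comm _ s]
    exact (div_le_div_iff₀ (Real.rpow_pos_of_pos hy _) (Real.rpow_pos_of_pos hx _)).1 h
  rw [← Real.div_rpow ht hs.le]
  exact (Real.le_rpow_inv_iff_of_pos (by positivity) (by positivity) hp).1 h'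

theorem min_apply_le_of_monotoneOn_of_antitoneOn {f : ℝ → ℝ} {a b x₀ x : ℝ}
    (hmono : MonotoneOn f (Icc a x₀)) (hanti : AntitoneOn f (Icc x₀ b)) (hx : x ∈ Icc a b) :
    min (f a) (f b) ≤ f x := by
  rcases le_total x x₀ with h | h
  · exact min_le_of_left_le (hmono ⟨le_rfl, hx.1.trans h⟩ ⟨hx.1, h⟩ hx.1)
  · exact min_le_of_right_le (hanti ⟨h, hx.2⟩ ⟨h.trans hx.2, le_rfl⟩ hx.2)

theorem eigenvalue_ratio_lower_bound_general {p : ℝ} (hp : 1 < p) {a b : ℝ} (hab : a < b)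
    {q : ℝ → ℝ} (hqc : ContinuousOn q (Icc a b)) (hqneg : ∀ x ∈ Icc a b, q x ≤ 0) {x₀ : ℝ}
    (hx₀ : x₀ ∈ Icc a b) (hmono : MonotoneOn q (Icc a x₀)) (hanti : AntitoneOn q (Icc x₀ b))
    {Λ : ℕ → ℝ} (hΛ : IsDirichletSpectrum p q a b Λ) {m n : ℕ} (hm : 1 ≤ m) (hmn : m ≤ n)
    (hΛm : 0 < Λ m) : (n : ℝ) ^ p / (m : ℝ) ^ p ≤ Λ n / Λ m := by
  have := Fact.mk hp
  have hn : 1 ≤ n := hm.trans hmn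
  have hΛmn : Λ m ≤ Λ n := hΛ.strictMonoOn.monotoneOn hm hn hmn
  have hΛn : 0 < Λ n := hΛm.trans_le hΛmn
  choose θ hθa hθ using fun z ↦ IsPrueferAngle.exists_of_continuousOn (p := p) hab.le z
    (k := fun x ↦ z ^ (1 - p) * -q x) (by fun_prop)
  have hθm := hΛ.angle_rpow_inv_eq hab hqc hm hΛm (hθa _) (hθ _)
  have hθn := hΛ.angle_rpow_inv_eq hab hqc hn hΛn (hθa _) (hθ _)
  have hangle : θ (Λ n ^ p⁻¹) b / Λ n ^ p⁻¹ ≤ θ (Λ m ^ p⁻¹) b / Λ m ^ p⁻¹ :=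
    IsPrueferAngle.div_le_div_of_single_well (j₁ := m) (j₂ := n) (Real.rpow_pos_of_pos hΛm _)
      (Real.rpow_le_rpow hΛm.le hΛmn (by positivity)) hqc.neg
      (fun x hx ↦ neg_nonneg.2 (hqneg x hx)) hx₀ hmono.neg hanti.neg (hθa _) (hθa _) (hθ _) (hθ _)
      (by exact_mod_cast hθm) (by exact_mod_cast hθn)
  rw [hθm, hθn, mul_div_right_comm, mul_div_right_comm,
    mul_le_mul_iff_left₀ (genPi_pos p)] at hangle
  exact rpow_div_rpow_le_div_of_div_rpow_inv_le (by positivity) (by positivity) n.cast_nonneg hΛm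
    hΛn hangle

/-- for nonpositive single-barrier potentials,
λ_n/λ_m ≥ n^p/m^p whenever λ_n > λ_m ≥ -2q*. -/
theorem eigenvalue_ratio_lower_bound
    (p : ℝ) (hp : 1 < p)
    (q : ℝ → ℝ) (hqc : ContinuousOn q (Set.Icc 0 1))
    (hqneg : ∀ x ∈ Set.Icc (0:ℝ) 1, q x ≤ 0)
    (x0 : ℝ) (hx0 : x0 ∈ Set.Icc (0:ℝ) 1)
    (hmono : MonotoneOn q (Set.Icc 0 x0)) (hanti : AntitoneOn q (Set.Icc x0 1))
    (Λ : ℕ → ℝ) (hΛmono : StrictMonoOn Λ {n | 1 ≤ n})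
    (hEig : ∀ n : ℕ, 1 ≤ n → IsDirichletEigenvalue p q 0 1 (Λ n))
    (hAll : ∀ μ : ℝ, IsDirichletEigenvalue p q 0 1 μ → ∃ n : ℕ, 1 ≤ n ∧ μ = Λ n) :
    ∀ m n : ℕ, 1 ≤ m → m < n →
      -2 * min (q 0) (q 1) ≤ Λ m → Λ m < Λ n →
      (n : ℝ) ^ p / (m : ℝ) ^ p ≤ Λ n / Λ m := by
  intro m n hm hmn hqm _
  have hΛ : IsDirichletSpectrum p q 0 1 Λ := ⟨hΛmono, hEig, hAll⟩
  have := Fact.mk hp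
  obtain ⟨x, hx, hxm⟩ := (hEig m hm).exists_lt one_pos hqc
  have hmin := min_apply_le_of_monotoneOn_of_antitoneOn hmono hanti hx
  exact eigenvalue_ratio_lower_bound_general hp one_pos hqc hqneg hx0 hmono hanti hΛ hm hmn.le
    (by linarith)
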